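/- arXiv:2511.10069 — 3 statements merged into one kernel-verified Lean document; each statement's English description precedes it below -/
import Mathlib

section
/- Assume the dHPR setup. Suppose a KKT point u* = (z*, w*, v*, x*) exists and that {u^k}_{k≥0}, {ū^k}_{k≥1} is a dHPR trajectory with initial point u⁰. Then there exist z∞ ∈ ℝ^m and w∞, v∞, x∞ ∈ ℝ^n such that (z̄^k, Uᵀw̄^k, v̄^k, x̄^k) converges to (z∞, Uᵀw∞, v∞, x∞) as k → ∞, and: (a) Aᵀz∞ + Uᵀw∞ + v∞ = 0, and f*(z∞) + r*(v∞) ≤ f*(z) + r*(v) (inequality in EReal) for every (z, w, v) ∈ ℝ^m × ℝ^n × ℝ^n with Aᵀz + Uᵀw + v = 0 (that is, (z∞, w∞, v∞) solves the dual problem); (b) U·x∞ = 0, and f(A·x∞) + r(x∞) ≤ f(A·x) + r(x) for every x ∈ ℝ^n with U·x = 0 (that is, x∞ solves the consensus primal problem). -/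
/-!
The proof views dHPR as a Halpern iteration for a degenerate proximal point method.

Write `Bᵀ (z, w) = Aᵀ z + Uᵀ w`. Since `S_w + U² = λ_U I`, the matrix `T` has diagonal blocks
`σ S_z + σ λ_U⁻¹ (A U)(A U)ᵀ = R_zᵀ R_z` and `σ (λ_U I - U²) = R_wᵀ R_w` (`TmatD_eq`). The optimality
conditions of the two subproblems (`SweepRel`) say that one sweep `(z, w, x) ↦ (z̄, w̄, x̄)` is a
proximal point step for the KKT operator in the positive semidefinite metric whose Gram map is
`metricMap : (z, w, x) ↦ (R_z z, R_w w, σ^{-1/2} (x - σ Bᵀ(z, w)))`. Let `a k`, `b k` be the images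
of `u^k`, `ū^{k+1}` under this map. Monotonicity of `∂f` and `∂r` gives
`⟨(a k - b k) - (a j - b j), b k - b j⟩ ≥ 0` (`SweepRel.monotone`), and likewise against the
image of any KKT point.

These inequalities, with the Halpern update, already force `a k` and `b k` to converge to a common
limit (`halpern`); no operator acting on the image space is needed. A Lyapunov function gives
`‖a k - b k‖ = O(1/k)` (`halpern_residual`). The set `Z` of all `p` with
`⟨a k - b k, b k - p⟩ ≥ 0` for every `k` is closed and convex and contains every cluster point, and
the limit is the projection of the anchor `a 0` onto `Z`.

Convergence in the seminorm of this metric is lifted to the iterates themselves. The vector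
`x^k - σ Bᵀ(z^k, w^k) = x̄^{k+1} + σ v̄^{k+1}` determines `x̄^{k+1}` in a nonexpansive way
(`norm_sub_le_of_add_smul`), so `x̄`, `v̄` and then `Bᵀ(z̄, w̄)` converge; as `T + σ B Bᵀ` is
nonsingular (`eq_zero_of_hessian`), so do `z̄` and `w̄`. Passing to the limit in `SweepRel` gives a
KKT point, and KKT points are primal and dual optimal (`optimal_of_kkt`).

The subproblems involve `f*` and `r*` rather than `f` and `r`. Optimality in terms of `∂f*` becomes
optimality in terms of `∂f` through `isSubgrad_of_conj_min`, which rests on the fact that a finite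
convex function on `ℝ^d` is the supremum of its affine minorants (`exists_affine_minorant`).
-/

open Matrix

noncomputable section

/-- Euclidean norm on `Fin d → ℝ`, `‖x‖ = √⟨x,x⟩`. -/
def euclNorm {d : ℕ} (x : Fin d → ℝ) : ℝ := Real.sqrt (x ⬝ᵥ x)

/-- Fenchel conjugate of a real-valued function `g : ℝ^d → ℝ`, with values in `EReal`. -/
def fconj {d : ℕ} (g : (Fin d → ℝ) → ℝ) (v : Fin d → ℝ) : EReal :=
  ⨆ y : Fin d → ℝ, ((v ⬝ᵥ y - g y : ℝ) : EReal)

/-- The sGS proximal matrix `T = blkdiag(σ·S_z + Ŝ_z, σ·S_w)` of the dHPR setup, where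
`S_w = λ_U·I − U²` and `Ŝ_z = σ·A·U·(S_w + U²)⁻¹·U·Aᵀ`. -/
def TmatD {m n : ℕ} (σ lU : ℝ) (A : Matrix (Fin m) (Fin n) ℝ) (U : Matrix (Fin n) (Fin n) ℝ)
    (Sz : Matrix (Fin m) (Fin m) ℝ) : Matrix (Fin m ⊕ Fin n) (Fin m ⊕ Fin n) ℝ :=
  Matrix.fromBlocks
    (σ • Sz +
      σ • (A * U * ((lU • (1 : Matrix (Fin n) (Fin n) ℝ) - U * U) + U * U)⁻¹ * U * Aᵀ)) 0 0
    (σ • (lU • (1 : Matrix (Fin n) (Fin n) ℝ) - U * U))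

/-- The `EReal`-valued objective of the `v`-subproblem (step (i) of a dHPR trajectory). -/
def vObj {m n : ℕ} (σ : ℝ) (r : (Fin n → ℝ) → ℝ) (A : Matrix (Fin m) (Fin n) ℝ)
    (U : Matrix (Fin n) (Fin n) ℝ) (xk : Fin n → ℝ) (zk : Fin m → ℝ) (wk : Fin n → ℝ)
    (v : Fin n → ℝ) : EReal :=
  fconj r v + ((-(xk ⬝ᵥ v) + σ / 2 * euclNorm (Aᵀ *ᵥ zk + Uᵀ *ᵥ wk + v) ^ 2 : ℝ) : EReal)

/-- The `EReal`-valued objective of the joint `(z,w)`-subproblem (step (iii) of a dHPR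
trajectory), with proximal matrix `Tm`. -/
def zwObj {m n : ℕ} (σ : ℝ) (f : (Fin m → ℝ) → ℝ) (A : Matrix (Fin m) (Fin n) ℝ)
    (U : Matrix (Fin n) (Fin n) ℝ) (Tm : Matrix (Fin m ⊕ Fin n) (Fin m ⊕ Fin n) ℝ)
    (xbar vbar : Fin n → ℝ) (z0 : Fin m → ℝ) (w0 : Fin n → ℝ)
    (z : Fin m → ℝ) (w : Fin n → ℝ) : EReal :=
  fconj f z +
    ((-(xbar ⬝ᵥ (Aᵀ *ᵥ z + Uᵀ *ᵥ w)) + σ / 2 * euclNorm (Aᵀ *ᵥ z + Uᵀ *ᵥ w + vbar) ^ 2 +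
      1 / 2 * (Sum.elim (z - z0) (w - w0) ⬝ᵥ (Tm *ᵥ Sum.elim (z - z0) (w - w0))) : ℝ) : EReal)

/-! ### Halpern iteration -/

open Filter Topology in
/-- The residual bound of the Halpern iteration: the potential
`k ‖a k - b k‖² + ⟨a k - a 0, a k - b k⟩` stays nonpositive. Only consecutive instances of `hmono`
enter. By Cauchy–Schwarz, `‖a k - b k‖ ≤ ‖a k - a 0‖ / k`. -/
theorem halpern_residual {E : Type*} [NormedAddCommGroup E] [InnerProductSpace ℝ E]
    (a b : ℕ → E)
    (hmono : ∀ j k, 0 ≤ inner ℝ ((a k - b k) - (a j - b j)) (b k - b j))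
    (hupd : ∀ k : ℕ, a (k + 1) = ((k : ℝ) + 2)⁻¹ • a 0 +
      (((k : ℝ) + 1) / ((k : ℝ) + 2)) • ((2 : ℝ) • b k - a k)) (k : ℕ) :
    inner ℝ (a k - a 0) (a k - b k) + k * ‖a k - b k‖ ^ 2 ≤ 0 := by
  induction k with
  | zero => simp
  | succ k ih =>
    obtain ⟨t, ht⟩ : ∃ t : ℝ, t = ((k : ℝ) + 2)⁻¹ := ⟨_, rfl⟩
    have hk2 : (0 : ℝ) < (k : ℝ) + 2 := by positivity
    have htk : t * ((k : ℝ) + 2) = 1 := by rw [ht]; exact inv_mul_cancel₀ hk2.ne'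
    have ht0 : 0 < t := by rw [ht]; positivity
    have hc : ((k : ℝ) + 1) / ((k : ℝ) + 2) = 1 - t := by
      rw [ht]; field_simp; ring
    have hu := hupd k
    rw [hc, ← ht] at hu
    obtain ⟨D, hD⟩ : ∃ D, D = a k - a 0 := ⟨_, rfl⟩
    obtain ⟨g, hg⟩ : ∃ g, g = a k - b k := ⟨_, rfl⟩
    obtain ⟨G, hG⟩ : ∃ G, G = a (k + 1) - b (k + 1) := ⟨_, rfl⟩
    have hD' : a (k + 1) - a 0 = (1 - t) • (D - (2 : ℝ) • g) := by
      rw [hu, hD, hg]; module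
    have hb : b (k + 1) - b k = -(t • D) - (2 * (1 - t)) • g - G + g := by
      have : b (k + 1) - b k = (a (k + 1) - a k) - G + g := by rw [hG, hg]; abel
      rw [this, hu, hD, hg]; module
    have hm := hmono k (k + 1)
    rw [hb, ← hG, ← hg] at hm
    rw [← hD, ← hg] at ih
    rw [hD', ← hG]
    rw [← real_inner_self_eq_norm_sq] at ih ⊢
    simp only [inner_sub_left, inner_sub_right, inner_add_right, inner_neg_right,
      inner_smul_left, inner_smul_right, real_inner_comm g G, real_inner_comm D G,
      real_inner_comm D g, RCLike.conj_to_real] at hm ih ⊢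
    have ih' := mul_nonpos_of_nonneg_of_nonpos ht0.le ih
    have h1 : t * inner ℝ D G - 2 * t * inner ℝ g G + inner ℝ G G ≤ 0 := by
      have : t * k = 1 - 2 * t := by linarith
      have e : t * (inner ℝ D g + k * inner ℝ g g)
        = t * inner ℝ D g + (1 - 2 * t) * inner ℝ g g := by rw [← this]; ring
      linarith
    have h2 : 1 - t = (k + 1) * t := by linarith
    rw [h2]
    push_cast
    have hk1 : (0 : ℝ) ≤ (k : ℝ) + 1 := by positivity
    have := mul_nonpos_of_nonneg_of_nonpos hk1 h1
    linarith

open Filter Topology in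
/-- Convergence of a Halpern iteration with anchor `a 0`. The sequence `b k` plays the part of the
resolvent at `a k`, but only the firm nonexpansiveness inequalities along the two sequences, and
against one reference point `p₀`, are assumed. -/
theorem halpern {E : Type*} [NormedAddCommGroup E] [InnerProductSpace ℝ E]
    [FiniteDimensional ℝ E] (a b : ℕ → E)
    (hmono : ∀ j k, 0 ≤ inner ℝ ((a k - b k) - (a j - b j)) (b k - b j))
    (p₀ : E) (hp₀ : ∀ k, 0 ≤ inner ℝ (a k - b k) (b k - p₀))
    (hupd : ∀ k : ℕ, a (k + 1) = ((k : ℝ) + 2)⁻¹ • a 0 +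
      (((k : ℝ) + 1) / ((k : ℝ) + 2)) • ((2 : ℝ) • b k - a k)) :
    ∃ p, Tendsto a atTop (𝓝 p) ∧ Tendsto b atTop (𝓝 p) := by
  have : ProperSpace E := FiniteDimensional.proper ℝ E
  -- a closed convex surrogate for the solution set, described by the iterates alone
  set Z : Set E := {p | ∀ k, 0 ≤ inner ℝ (a k - b k) (b k - p)} with hZ
  have hZne : Z.Nonempty := ⟨p₀, hp₀⟩
  have hZcl : IsClosed Z := by
    rw [hZ, Set.ofPred_forall]
    exact isClosed_iInter fun k => isClosed_le continuous_const (by fun_prop)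
  have hZcv : Convex ℝ Z := by
    intro p hp q hq s t hs ht hst k
    have e : b k - (s • p + t • q) = s • (b k - p) + t • (b k - q) := by
      have : b k = (s + t) • b k := by rw [hst, one_smul]
      nth_rewrite 1 [this]; module
    rw [e, inner_add_right, inner_smul_right, inner_smul_right]
    have := hp k
    have := hq k
    positivity
  have hquasi : ∀ p ∈ Z, ∀ k, ‖((2 : ℝ) • b k - a k) - p‖ ^ 2 ≤ ‖a k - p‖ ^ 2 := by
    intro p hp k
    have h := hp k
    have e1 : ((2 : ℝ) • b k - a k) - p = (b k - p) - (a k - b k) := by module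
    have e2 : a k - p = (b k - p) + (a k - b k) := by module
    rw [e1, e2, norm_sub_sq_real, norm_add_sq_real, real_inner_comm]
    rw [real_inner_comm] at h
    rw [real_inner_comm]
    linarith
  have hstep : ∀ (p : E) (k : ℕ), a (k + 1) - p = ((k : ℝ) + 2)⁻¹ • (a 0 - p) +
      (((k : ℝ) + 1) / ((k : ℝ) + 2)) • (((2 : ℝ) • b k - a k) - p) := by
    intro p k
    have hk2 : (k : ℝ) + 2 ≠ 0 := by positivity
    have hc : ((k : ℝ) + 1) / ((k : ℝ) + 2) = 1 - ((k : ℝ) + 2)⁻¹ := by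
      field_simp; ring
    rw [hupd k, hc]; module
  have hbdd : ∀ k, ‖a k - p₀‖ ≤ ‖a 0 - p₀‖ := by
    intro k
    induction k with
    | zero => exact le_rfl
    | succ k ih =>
      have hk2 : (0 : ℝ) < (k : ℝ) + 2 := by positivity
      have h1 : ‖((2 : ℝ) • b k - a k) - p₀‖ ≤ ‖a 0 - p₀‖ :=
        (pow_le_pow_iff_left₀ (norm_nonneg _) (norm_nonneg _) two_ne_zero).1 (hquasi p₀ hp₀ k) |>.trans ih
      rw [hstep]
      refine (norm_add_le _ _).trans ?_
      rw [norm_smul, norm_smul, Real.norm_of_nonneg (by positivity),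
        Real.norm_of_nonneg (by positivity)]
      calc _ ≤ ((k : ℝ) + 2)⁻¹ * ‖a 0 - p₀‖ +
            (((k : ℝ) + 1) / ((k : ℝ) + 2)) * ‖a 0 - p₀‖ := by gcongr
        _ = ‖a 0 - p₀‖ := by field_simp; ring
  have hres : Tendsto (fun k => a k - b k) atTop (𝓝 0) := by
    have hle : ∀ᶠ k : ℕ in atTop, ‖a k - b k‖ ≤ (2 * ‖a 0 - p₀‖) / k := by
      filter_upwards [eventually_gt_atTop 0] with k hk
      have hk' : (0 : ℝ) < k := by exact_mod_cast hk
      have h1 := halpern_residual a b hmono hupd k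
      have h2 : -(‖a k - a 0‖ * ‖a k - b k‖) ≤ inner ℝ (a k - a 0) (a k - b k) :=
        (abs_le.1 (abs_real_inner_le_norm _ _)).1
      have h3 : ‖a k - a 0‖ ≤ 2 * ‖a 0 - p₀‖ := by
        have : a k - a 0 = (a k - p₀) - (a 0 - p₀) := by abel
        rw [this]
        refine (norm_sub_le _ _).trans ?_
        linarith [hbdd k]
      rw [le_div_iff₀ hk']
      rcases (norm_nonneg (a k - b k)).eq_or_lt with h0 | h0
      · rw [← h0]; simp
      · have h4 : ‖a k - b k‖ * (‖a k - b k‖ * k) ≤ ‖a k - b k‖ * (2 * ‖a 0 - p₀‖) := by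
          nlinarith
        exact le_of_mul_le_mul_left h4 h0
    exact squeeze_zero_norm' hle (tendsto_const_div_atTop_nhds_zero_nat _)
  -- the metric projection of the anchor onto `Z` is the limit
  obtain ⟨p, hpZ, hpmin⟩ := exists_norm_eq_iInf_of_complete_convex hZne hZcl.isComplete hZcv (a 0)
  have hpvar := (norm_eq_iInf_iff_real_inner_le_zero hZcv hpZ).1 hpmin
  have hlim : ∀ ε > 0, ∀ᶠ k in atTop, inner ℝ (a 0 - p) (a k - p) ≤ ε := by
    intro ε hε
    by_contra hcon
    obtain ⟨φ, hφ, hφε⟩ := extraction_of_frequently_atTop (not_eventually.1 hcon)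
    have hball : ∀ i, (a ∘ φ) i ∈ Metric.closedBall p₀ ‖a 0 - p₀‖ := fun i => by
      rw [Metric.mem_closedBall, dist_eq_norm]; exact hbdd _
    obtain ⟨q, -, ψ, hψ, hq⟩ := (isCompact_closedBall p₀ ‖a 0 - p₀‖).tendsto_subseq hball
    have hq' : Tendsto (fun i => a (φ (ψ i))) atTop (𝓝 q) := hq
    have hsub : Tendsto (fun i => φ (ψ i)) atTop atTop := hφ.tendsto_atTop.comp hψ.tendsto_atTop
    have hres' := hres.comp hsub
    have hbq : Tendsto (fun i => b (φ (ψ i))) atTop (𝓝 q) := by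
      have := hq'.sub hres'
      simpa [Function.comp_def] using this
    have hqZ : q ∈ Z := by
      intro k
      have h1 : Tendsto (fun i => inner ℝ ((a k - b k) - (a (φ (ψ i)) - b (φ (ψ i))))
          (b k - b (φ (ψ i)))) atTop (𝓝 (inner ℝ ((a k - b k) - 0) (b k - q))) :=
        (tendsto_const_nhds.sub hres').inner (tendsto_const_nhds.sub hbq)
      rw [sub_zero] at h1
      exact ge_of_tendsto' h1 fun i => hmono _ _
    have h2 : Tendsto (fun i => inner ℝ (a 0 - p) (a (φ (ψ i)) - p)) atTop
        (𝓝 (inner ℝ (a 0 - p) (q - p))) :=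
      tendsto_const_nhds.inner (hq'.sub_const p)
    have h3 : ε ≤ inner ℝ (a 0 - p) (q - p) :=
      ge_of_tendsto' h2 fun i => (not_le.1 (hφε (ψ i))).le
    linarith [hpvar q hqZ]
  -- expand the norm of `2 b k - a k - p`, read off from the update rule
  have hrec : ∀ k : ℕ, ((k : ℝ) + 2) * ‖a (k + 1) - p‖ ^ 2 ≤
      ((k : ℝ) + 1) * ‖a k - p‖ ^ 2 + 2 * inner ℝ (a 0 - p) (a (k + 1) - p) := by
    intro k
    have hk2 : (0 : ℝ) < (k : ℝ) + 2 := by positivity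
    obtain ⟨X, hX⟩ : ∃ X, X = a (k + 1) - p := ⟨_, rfl⟩
    obtain ⟨N, hN⟩ : ∃ N, N = ((2 : ℝ) • b k - a k) - p := ⟨_, rfl⟩
    have h1 := hquasi p hpZ k
    have h2 : ((k : ℝ) + 1) • N = ((k : ℝ) + 2) • X - (a 0 - p) := by
      rw [hX, hstep, ← hN, smul_add, smul_smul, smul_smul, mul_inv_cancel₀ hk2.ne',
        mul_div_cancel₀ _ hk2.ne']
      module
    have h3 : ((k : ℝ) + 1) ^ 2 * ‖N‖ ^ 2 = ((k : ℝ) + 2) ^ 2 * ‖X‖ ^ 2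
        - 2 * (((k : ℝ) + 2) * inner ℝ (a 0 - p) X) + ‖a 0 - p‖ ^ 2 := by
      generalize a 0 - p = c at h2 ⊢
      have := congrArg (fun y => ‖y‖ ^ 2) h2
      simp only [norm_sub_sq_real, norm_smul, inner_smul_left, mul_pow, Real.norm_eq_abs,
        sq_abs, RCLike.conj_to_real] at this
      rw [this, real_inner_comm]
    rw [← hN] at h1
    rw [← hX]
    have h4 : ((k : ℝ) + 1) ^ 2 * ‖N‖ ^ 2 ≤ ((k : ℝ) + 2) * ((k : ℝ) + 1) * ‖a k - p‖ ^ 2 := by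
      have : ((k : ℝ) + 1) ^ 2 ≤ ((k : ℝ) + 2) * ((k : ℝ) + 1) := by nlinarith
      gcongr
    have h5 : 0 ≤ ‖a 0 - p‖ ^ 2 := by positivity
    refine le_of_mul_le_mul_left ?_ hk2
    linarith
  have hconv : Tendsto a atTop (𝓝 p) := by
    rw [tendsto_iff_norm_sub_tendsto_zero]
    have hsq : Tendsto (fun k => ‖a k - p‖ ^ 2) atTop (𝓝 0) := by
      rw [Metric.tendsto_atTop]
      intro ε hε
      obtain ⟨N, hN⟩ := eventually_atTop.1 (hlim (ε / 4) (by positivity))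
      have hind : ∀ i : ℕ, ((N + i : ℕ) + 1 : ℝ) * ‖a (N + i) - p‖ ^ 2 ≤
          (N + 1) * ‖a N - p‖ ^ 2 + i * (ε / 2) := by
        intro i
        induction i with
        | zero => simp
        | succ i ih =>
          have h1 := hrec (N + i)
          have h2 := hN (N + i + 1) (by omega)
          push_cast at *
          rw [← add_assoc N i 1]
          linarith
      have hK : Tendsto (fun k : ℕ => ((N + 1) * ‖a N - p‖ ^ 2) / (k : ℝ)) atTop (𝓝 0) :=
        tendsto_const_div_atTop_nhds_zero_nat _
      obtain ⟨N', hN'⟩ := eventually_atTop.1 (hK.eventually (gt_mem_nhds (half_pos hε)))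
      refine ⟨N + N' + 1, fun k hk => ?_⟩
      rw [Real.dist_eq, sub_zero, abs_of_nonneg (by positivity)]
      obtain ⟨i, rfl⟩ := Nat.exists_eq_add_of_le (show N ≤ k by omega)
      have h1 := hind i
      have h2 := hN' (N + i) (by omega)
      have hpos : (0 : ℝ) < ((N + i : ℕ) : ℝ) := by exact_mod_cast (by omega)
      rw [div_lt_iff₀ hpos] at h2
      have hi : (i : ℝ) ≤ ((N + i : ℕ) : ℝ) := by exact_mod_cast (by omega)
      have h3 : (i : ℝ) * (ε / 2) ≤ ((N + i : ℕ) : ℝ) * (ε / 2) := by gcongr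
      have h4 : ((N + i : ℕ) + 1 : ℝ) * ‖a (N + i) - p‖ ^ 2 < ((N + i : ℕ) + 1 : ℝ) * ε := by
        linarith
      exact lt_of_mul_lt_mul_left h4 (by positivity)
    have := hsq.sqrt
    simpa [Real.sqrt_sq] using this
  refine ⟨p, hconv, ?_⟩
  simpa using hconv.sub hres

/-! ### Subgradients and Fenchel conjugates -/

/-- `v` is a subgradient of `g` at `x`. -/
def IsSubgrad {d : ℕ} (g : (Fin d → ℝ) → ℝ) (x v : Fin d → ℝ) : Prop :=
  ∀ y, g x + v ⬝ᵥ (y - x) ≤ g y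

theorem euclNorm_sq {d : ℕ} (x : Fin d → ℝ) : euclNorm x ^ 2 = x ⬝ᵥ x :=
  Real.sq_sqrt (by simpa using dotProduct_star_self_nonneg x)

/-- The quadratic form of the first-order test: divide by `t` and let `t → 0`. -/
theorem nonneg_of_first_order {a C : ℝ} (h : ∀ t : ℝ, 0 < t → t ≤ 1 → 0 ≤ t * a + t ^ 2 * C) :
    0 ≤ a := by
  by_contra! ha
  have hC : 0 < |C| + 1 := by positivity
  obtain ⟨t, ht⟩ : ∃ t : ℝ, t = min 1 (-a / (2 * (|C| + 1))) := ⟨_, rfl⟩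
  have ht0 : 0 < t := by
    rw [ht]; exact lt_min one_pos (div_pos (by linarith) (by positivity))
  have ht1 : t ≤ 1 := by rw [ht]; exact min_le_left _ _
  have ht2 : t * (2 * (|C| + 1)) ≤ -a := by
    rw [← le_div_iff₀ (by positivity), ht]; exact min_le_right _ _
  have h1 := h t ht0 ht1
  have h2 : 0 ≤ t * (a + t * C) := by linarith
  have h3 := nonneg_of_mul_nonneg_right h2 ht0
  have h4 : t * C ≤ t * |C| := mul_le_mul_of_nonneg_left (le_abs_self C) ht0.le
  linarith

/-- A proximal fixed-point inclusion `x = prox_g (v + x)` is the subgradient inclusion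
`v ∈ ∂g(x)`. -/
theorem isSubgrad_of_prox {d : ℕ} {g : (Fin d → ℝ) → ℝ} (hg : ConvexOn ℝ Set.univ g)
    {x v c : Fin d → ℝ} (hc : c = v + x)
    (h : ∀ y, g x + 1 / 2 * euclNorm (x - c) ^ 2 ≤ g y + 1 / 2 * euclNorm (y - c) ^ 2) :
    IsSubgrad g x v := by
  intro y
  suffices 0 ≤ g y - g x - v ⬝ᵥ (y - x) by linarith
  refine nonneg_of_first_order (C := 1 / 2 * ((y - x) ⬝ᵥ (y - x))) fun t ht0 ht1 => ?_
  have h1 := h (x + t • (y - x))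
  have h2 : g (x + t • (y - x)) ≤ (1 - t) * g x + t * g y := by
    have := hg.2 (Set.mem_univ x) (Set.mem_univ y) (sub_nonneg.2 ht1) ht0.le (by ring)
    rw [smul_eq_mul, smul_eq_mul] at this
    have e : (1 - t) • x + t • y = x + t • (y - x) := by module
    rwa [e] at this
  rw [euclNorm_sq, euclNorm_sq, hc] at h1
  have e1 : x - (v + x) = -v := by abel
  have e2 : x + t • (y - x) - (v + x) = t • (y - x) - v := by abel
  rw [e1, e2] at h1
  generalize y - x = D at *
  simp only [sub_dotProduct, dotProduct_sub, smul_dotProduct, dotProduct_smul, smul_eq_mul,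
    neg_dotProduct, dotProduct_neg, neg_neg, dotProduct_comm D v] at h1
  linarith

theorem fconj_le_coe_iff {d : ℕ} {g : (Fin d → ℝ) → ℝ} {v : Fin d → ℝ} {s : ℝ} :
    fconj g v ≤ (s : EReal) ↔ ∀ y, v ⬝ᵥ y - g y ≤ s := by
  simp only [fconj, iSup_le_iff, EReal.coe_le_coe_iff]

theorem fconj_ne_bot {d : ℕ} (g : (Fin d → ℝ) → ℝ) (v : Fin d → ℝ) : fconj g v ≠ ⊥ := by
  intro h
  have h1 : ((v ⬝ᵥ 0 - g 0 : ℝ) : EReal) ≤ fconj g v :=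
    le_iSup (fun y : Fin d → ℝ => ((v ⬝ᵥ y - g y : ℝ) : EReal)) 0
  rw [h, le_bot_iff] at h1
  exact EReal.coe_ne_bot _ h1

theorem fconj_le_of_isSubgrad {d : ℕ} {g : (Fin d → ℝ) → ℝ} {x v : Fin d → ℝ}
    (h : IsSubgrad g x v) : fconj g v ≤ ((v ⬝ᵥ x - g x : ℝ) : EReal) := by
  rw [fconj_le_coe_iff]
  intro y
  have := h y
  rw [dotProduct_sub] at this
  linarith

/-- A finite convex function has an affine minorant through any point strictly below its graph. -/
theorem exists_affine_minorant {d : ℕ} {g : (Fin d → ℝ) → ℝ} (hg : ConvexOn ℝ Set.univ g)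
    {x : Fin d → ℝ} {a : ℝ} (ha : a < g x) :
    ∃ (e : Fin d → ℝ) (c : ℝ), (∀ y, e ⬝ᵥ y + c ≤ g y) ∧ e ⬝ᵥ x + c = a := by
  have hcont : ContinuousOn g Set.univ := hg.continuousOn isOpen_univ
  obtain ⟨l, c, h1, h2⟩ := hg.exists_affine_le_of_lt (𝕜 := ℝ) (Set.mem_univ x) ha isClosed_univ
    hcont.lowerSemicontinuousOn
  have hl : ∀ y, (fun i => l (Pi.single i 1)) ⬝ᵥ y = l y := by
    intro y
    conv_rhs => rw [pi_eq_sum_univ' y, map_sum]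
    simp only [dotProduct, map_smul, smul_eq_mul]
    refine Finset.sum_congr rfl fun i _ => ?_
    rw [mul_comm]
  refine ⟨fun i => l (Pi.single i 1), c, fun y => ?_, ?_⟩
  · rw [hl]; exact h1 ⟨y, Set.mem_univ y⟩
  · rw [hl]; exact h2

/-- First-order optimality for `min g* + q`, with `q` differentiable at the minimiser `v` (with
gradient `-p`): `p ∈ ∂g*(v)`, which by Fenchel–Moreau biconjugation is `v ∈ ∂g(p)`. -/
theorem isSubgrad_of_conj_min {d : ℕ} {g : (Fin d → ℝ) → ℝ} (hg : ConvexOn ℝ Set.univ g)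
    {v p : Fin d → ℝ} (q : (Fin d → ℝ) → ℝ)
    (hfin : ∃ v₀, fconj g v₀ ≠ ⊤)
    (hmin : ∀ v', fconj g v + (q v : EReal) ≤ fconj g v' + (q v' : EReal))
    (hq : ∀ D, ∃ C, ∀ t : ℝ, q (v + t • D) ≤ q v - t * (p ⬝ᵥ D) + t ^ 2 * C) :
    IsSubgrad g p v := by
  obtain ⟨v₀, hv₀⟩ := hfin
  have hfv : fconj g v ≠ ⊤ := by
    intro htop
    have := hmin v₀
    rw [htop, EReal.top_add_coe, top_le_iff] at this
    lift fconj g v₀ to ℝ using ⟨hv₀, fconj_ne_bot g v₀⟩ with s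
    exact EReal.coe_ne_top _ (by exact_mod_cast this)
  obtain ⟨c, hc⟩ : ∃ c : ℝ, fconj g v = c :=
    ⟨_, (EReal.coe_toReal hfv (fconj_ne_bot g v)).symm⟩
  have hcv := fconj_le_coe_iff.1 hc.le
  have hsub : ∀ (v' : Fin d → ℝ) (s : ℝ), (∀ y, v' ⬝ᵥ y - g y ≤ s) → c + p ⬝ᵥ (v' - v) ≤ s := by
    intro v' s hs
    obtain ⟨C, hC⟩ := hq (v' - v)
    suffices 0 ≤ s - c - p ⬝ᵥ (v' - v) by linarith
    refine nonneg_of_first_order (C := C) fun t ht0 ht1 => ?_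
    have h1 : fconj g (v + t • (v' - v)) ≤ (((1 - t) * c + t * s : ℝ) : EReal) := by
      rw [fconj_le_coe_iff]
      intro y
      have e : (v + t • (v' - v)) ⬝ᵥ y - g y
          = (1 - t) * (v ⬝ᵥ y - g y) + t * (v' ⬝ᵥ y - g y) := by
        simp only [add_dotProduct, smul_dotProduct, sub_dotProduct, smul_eq_mul]; ring
      rw [e]
      have := mul_le_mul_of_nonneg_left (hcv y) (sub_nonneg.2 ht1)
      have := mul_le_mul_of_nonneg_left (hs y) ht0.le
      linarith
    have h2 := (hmin (v + t • (v' - v))).trans (add_le_add_left h1 _)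
    rw [hc] at h2
    have h3 : c + q v ≤ (1 - t) * c + t * s + q (v + t • (v' - v)) := by exact_mod_cast h2
    have := hC t
    linarith
  have hgp : g p ≤ v ⬝ᵥ p - c := by
    refine le_of_forall_lt_imp_le_of_dense fun a ha => ?_
    obtain ⟨e, b, he, hb⟩ := exists_affine_minorant hg ha
    have h1 := hsub e (-b) fun y => by linarith [he y]
    rw [dotProduct_sub, dotProduct_comm p e, dotProduct_comm p v] at h1
    linarith
  intro y
  have := hcv y
  rw [dotProduct_sub]
  linarith

open Filter Topology in
/-- Closedness of the graph of `∂g`; `g` is continuous, being convex and finite on `ℝ^d`. -/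
theorem isSubgrad_of_tendsto {d : ℕ} {g : (Fin d → ℝ) → ℝ} (hg : ConvexOn ℝ Set.univ g)
    {x v : ℕ → Fin d → ℝ} {x' v' : Fin d → ℝ} (h : ∀ k, IsSubgrad g (x k) (v k))
    (hx : Tendsto x atTop (𝓝 x')) (hv : Tendsto v atTop (𝓝 v')) : IsSubgrad g x' v' := by
  intro y
  have hcont : Continuous g :=
    continuousOn_univ.1 (hg.continuousOn isOpen_univ)
  have hdot : Continuous fun q : (Fin d → ℝ) × (Fin d → ℝ) => q.1 ⬝ᵥ q.2 := by fun_prop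
  refine le_of_tendsto' (((hcont.tendsto _).comp hx).add
    ((hdot.tendsto _).comp (hv.prodMk_nhds (hx.const_sub y)))) fun k => h k y

theorem IsSubgrad.monotone {d : ℕ} {g : (Fin d → ℝ) → ℝ} {x₁ v₁ x₂ v₂ : Fin d → ℝ}
    (h₁ : IsSubgrad g x₁ v₁) (h₂ : IsSubgrad g x₂ v₂) : 0 ≤ (x₁ - x₂) ⬝ᵥ (v₁ - v₂) := by
  have h1 := h₁ x₂
  have h2 := h₂ x₁
  simp only [dotProduct_sub, sub_dotProduct, dotProduct_comm x₁, dotProduct_comm x₂] at *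
  linarith

/-- Optimality in the `v`-subproblem: the updated multiplier `x̄` satisfies `v̄ ∈ ∂r(x̄)`. -/
theorem vObj_optimality {m n : ℕ} {σ : ℝ} {r : (Fin n → ℝ) → ℝ} (hr : ConvexOn ℝ Set.univ r)
    (hfin : ∃ v₀, fconj r v₀ ≠ ⊤)
    {A : Matrix (Fin m) (Fin n) ℝ} {U : Matrix (Fin n) (Fin n) ℝ} {x w v : Fin n → ℝ}
    {z : Fin m → ℝ} (h : ∀ v', vObj σ r A U x z w v ≤ vObj σ r A U x z w v') :
    IsSubgrad r (x - σ • (Aᵀ *ᵥ z + Uᵀ *ᵥ w + v)) v := by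
  refine isSubgrad_of_conj_min hr
    (fun v => -(x ⬝ᵥ v) + σ / 2 * euclNorm (Aᵀ *ᵥ z + Uᵀ *ᵥ w + v) ^ 2) hfin h fun D =>
    ⟨σ / 2 * (D ⬝ᵥ D), fun t => le_of_eq ?_⟩
  simp only [euclNorm_sq]
  rw [← add_assoc]
  generalize Aᵀ *ᵥ z + Uᵀ *ᵥ w + v = q
  simp only [sub_dotProduct, smul_dotProduct, dotProduct_smul, smul_eq_mul,
    add_dotProduct, dotProduct_add, dotProduct_comm D q]
  ring

/-- Stationarity in `z` and in `w` of the `(z, w)`-subproblem with a symmetric block-diagonal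
proximal matrix. -/
theorem zwObj_optimality {m n : ℕ} {σ : ℝ} {f : (Fin m → ℝ) → ℝ} (hf : ConvexOn ℝ Set.univ f)
    (hfin : ∃ z₀, fconj f z₀ ≠ ⊤)
    {A : Matrix (Fin m) (Fin n) ℝ} {U : Matrix (Fin n) (Fin n) ℝ}
    {Tz : Matrix (Fin m) (Fin m) ℝ} {Tw : Matrix (Fin n) (Fin n) ℝ}
    (hTz : Tzᵀ = Tz) (hTw : Twᵀ = Tw) {xb vb w₀ w : Fin n → ℝ} {z₀ z : Fin m → ℝ}
    (h : ∀ z' w', zwObj σ f A U (Matrix.fromBlocks Tz 0 0 Tw) xb vb z₀ w₀ z w ≤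
      zwObj σ f A U (Matrix.fromBlocks Tz 0 0 Tw) xb vb z₀ w₀ z' w') :
    IsSubgrad f (A *ᵥ xb - σ • (A *ᵥ (Aᵀ *ᵥ z + Uᵀ *ᵥ w + vb)) + Tz *ᵥ (z₀ - z)) z ∧
      U *ᵥ xb - σ • (U *ᵥ (Aᵀ *ᵥ z + Uᵀ *ᵥ w + vb)) + Tw *ᵥ (w₀ - w) = 0 := by
  have hA : ∀ (q : Fin n → ℝ) (D : Fin m → ℝ), A *ᵥ q ⬝ᵥ D = q ⬝ᵥ (Aᵀ *ᵥ D) := fun q D => by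
    rw [dotProduct_mulVec, vecMul_transpose]
  have hUm : ∀ (q : Fin n → ℝ) (D : Fin n → ℝ), U *ᵥ q ⬝ᵥ D = q ⬝ᵥ (Uᵀ *ᵥ D) := fun q D => by
    rw [dotProduct_mulVec, vecMul_transpose]
  have hTz' : ∀ c D, Tz *ᵥ c ⬝ᵥ D = c ⬝ᵥ (Tz *ᵥ D) := fun c D => by
    rw [dotProduct_mulVec, ← mulVec_transpose, hTz]
  have hTw' : ∀ c D, Tw *ᵥ c ⬝ᵥ D = c ⬝ᵥ (Tw *ᵥ D) := fun c D => by
    rw [dotProduct_mulVec, ← mulVec_transpose, hTw]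
  have hT : ∀ (a : Fin m → ℝ) (b : Fin n → ℝ),
      Sum.elim a b ⬝ᵥ (Matrix.fromBlocks Tz 0 0 Tw *ᵥ Sum.elim a b)
        = a ⬝ᵥ (Tz *ᵥ a) + b ⬝ᵥ (Tw *ᵥ b) := by
    intro a b
    rw [fromBlocks_mulVec, sumElim_dotProduct_sumElim]
    simp
  have e2 : z₀ - z = -(z - z₀) := by abel
  have e3 : w₀ - w = -(w - w₀) := by abel
  constructor
  · refine isSubgrad_of_conj_min hf (fun z => -(xb ⬝ᵥ (Aᵀ *ᵥ z + Uᵀ *ᵥ w)) +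
      σ / 2 * euclNorm (Aᵀ *ᵥ z + Uᵀ *ᵥ w + vb) ^ 2 + 1 / 2 * (Sum.elim (z - z₀) (w - w₀) ⬝ᵥ
        (Matrix.fromBlocks Tz 0 0 Tw *ᵥ Sum.elim (z - z₀) (w - w₀)))) hfin
      (fun z' => h z' w) fun D =>
      ⟨σ / 2 * ((Aᵀ *ᵥ D) ⬝ᵥ (Aᵀ *ᵥ D)) + 1 / 2 * (D ⬝ᵥ (Tz *ᵥ D)), fun t => le_of_eq ?_⟩
    simp only [euclNorm_sq, hT]
    have e1 : z + t • D - z₀ = (z - z₀) + t • D := by abel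
    rw [e1, e2, mulVec_neg]
    generalize z - z₀ = c
    simp only [mulVec_add, mulVec_smul, sub_dotProduct, smul_dotProduct,
      dotProduct_smul, smul_eq_mul, add_dotProduct, dotProduct_add, hA, hTz', neg_dotProduct,
      dotProduct_comm (Aᵀ *ᵥ D) (Aᵀ *ᵥ z), dotProduct_comm (Aᵀ *ᵥ D) (Uᵀ *ᵥ w),
      dotProduct_comm (Aᵀ *ᵥ D) vb, dotProduct_comm (Uᵀ *ᵥ w) (Aᵀ *ᵥ z),
      dotProduct_comm vb (Aᵀ *ᵥ z), dotProduct_comm vb (Uᵀ *ᵥ w)]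
    rw [← hTz' D c, dotProduct_comm (Tz *ᵥ D) c]
    ring
  · set N := U *ᵥ xb - σ • (U *ᵥ (Aᵀ *ᵥ z + Uᵀ *ᵥ w + vb)) + Tw *ᵥ (w₀ - w) with hN
    -- `f*` is finite at the minimiser, so it cancels when only `w` varies
    obtain ⟨z₁, hz₁⟩ := hfin
    have hfz : fconj f z ≠ ⊤ := by
      intro htop
      have := h z₁ w
      rw [zwObj, zwObj, htop, EReal.top_add_coe, top_le_iff] at this
      lift fconj f z₁ to ℝ using ⟨hz₁, fconj_ne_bot f z₁⟩ with s
      exact EReal.coe_ne_top _ (by exact_mod_cast this)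
    obtain ⟨c, hc⟩ : ∃ c : ℝ, fconj f z = c :=
      ⟨_, (EReal.coe_toReal hfz (fconj_ne_bot f z)).symm⟩
    have key : 0 ≤ -(N ⬝ᵥ N) := by
      refine nonneg_of_first_order
        (C := σ / 2 * ((Uᵀ *ᵥ N) ⬝ᵥ (Uᵀ *ᵥ N)) + 1 / 2 * (N ⬝ᵥ (Tw *ᵥ N))) fun t _ _ => ?_
      have h1 := h z (w + t • N)
      rw [zwObj, zwObj, hc, hT, hT] at h1
      have h2 := (EReal.coe_le_coe_iff.1 (by exact_mod_cast h1 :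
        ((_ : ℝ) : EReal) ≤ ((_ : ℝ) : EReal)))
      simp only [euclNorm_sq] at h2
      have hNN : N ⬝ᵥ N = (U *ᵥ xb - σ • (U *ᵥ (Aᵀ *ᵥ z + Uᵀ *ᵥ w + vb)) +
        Tw *ᵥ (w₀ - w)) ⬝ᵥ N := by rw [← hN]
      rw [hNN]
      clear_value N
      clear hN hNN h h1
      have e1 : w + t • N - w₀ = (w - w₀) + t • N := by abel
      rw [e3, mulVec_neg]
      rw [e1] at h2
      generalize w - w₀ = c at *
      simp only [mulVec_add, mulVec_smul, sub_dotProduct, smul_dotProduct,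
        dotProduct_smul, smul_eq_mul, add_dotProduct, dotProduct_add, hUm, neg_dotProduct,
        dotProduct_comm (Uᵀ *ᵥ N) (Aᵀ *ᵥ z), dotProduct_comm (Uᵀ *ᵥ N) (Uᵀ *ᵥ w),
        dotProduct_comm (Uᵀ *ᵥ N) vb, dotProduct_comm (Uᵀ *ᵥ w) (Aᵀ *ᵥ z),
        dotProduct_comm vb (Aᵀ *ᵥ z), dotProduct_comm vb (Uᵀ *ᵥ w)] at h2 ⊢
      rw [← hTw' N c, dotProduct_comm (Tw *ᵥ N) c] at h2
      rw [hTw' c N]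
      linarith
    have : N ⬝ᵥ N = 0 := le_antisymm (by linarith) (by simpa using dotProduct_star_self_nonneg N)
    exact dotProduct_self_eq_zero.1 this

/-! ### The degenerate metric and one sweep of the method -/

/-- The linear map `u = (z, w, x) ↦ (R_z z, R_w w, σ^{-1/2} (x - σ (Aᵀ z + Uᵀ w)))`.  With
`R_zᵀ R_z = T_z` and `R_wᵀ R_w = T_w`, its Gram matrix is the degenerate proximal metric of the
method. -/
def metricMap {m n : ℕ} (σ : ℝ) (A : Matrix (Fin m) (Fin n) ℝ) (U : Matrix (Fin n) (Fin n) ℝ)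
    (Rz : Matrix (Fin m) (Fin m) ℝ) (Rw : Matrix (Fin n) (Fin n) ℝ) :
    ((Fin m → ℝ) × (Fin n → ℝ) × (Fin n → ℝ)) →ₗ[ℝ]
      EuclideanSpace ℝ (Fin m ⊕ (Fin n ⊕ Fin n)) where
  toFun u := WithLp.toLp 2 (Sum.elim (Rz *ᵥ u.1) (Sum.elim (Rw *ᵥ u.2.1)
    ((Real.sqrt σ)⁻¹ • (u.2.2 - σ • (Aᵀ *ᵥ u.1 + Uᵀ *ᵥ u.2.1)))))
  map_add' u u' := by
    ext i
    rcases i with i | i | i <;> simp [mulVec_add] <;> ring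
  map_smul' c u := by
    ext i
    rcases i with i | i | i <;> simp [mulVec_smul] <;> ring

theorem inner_metricMap {m n : ℕ} {σ : ℝ} (hσ : 0 < σ) {A : Matrix (Fin m) (Fin n) ℝ}
    {U : Matrix (Fin n) (Fin n) ℝ} {Rz : Matrix (Fin m) (Fin m) ℝ}
    {Rw : Matrix (Fin n) (Fin n) ℝ} (d e : (Fin m → ℝ) × (Fin n → ℝ) × (Fin n → ℝ)) :
    inner ℝ (metricMap σ A U Rz Rw d) (metricMap σ A U Rz Rw e) =
      ((Rzᵀ * Rz) *ᵥ d.1) ⬝ᵥ e.1 + ((Rwᵀ * Rw) *ᵥ d.2.1) ⬝ᵥ e.2.1 +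
        σ⁻¹ * ((d.2.2 - σ • (Aᵀ *ᵥ d.1 + Uᵀ *ᵥ d.2.1)) ⬝ᵥ
          (e.2.2 - σ • (Aᵀ *ᵥ e.1 + Uᵀ *ᵥ e.2.1))) := by
  have hR : ∀ {l : ℕ} (R : Matrix (Fin l) (Fin l) ℝ) (a b : Fin l → ℝ),
      ((Rᵀ * R) *ᵥ a) ⬝ᵥ b = (R *ᵥ b) ⬝ᵥ (R *ᵥ a) := by
    intro l R a b
    rw [← mulVec_mulVec, mulVec_transpose, ← dotProduct_mulVec, dotProduct_comm]
  have hs : (Real.sqrt σ)⁻¹ * (Real.sqrt σ)⁻¹ = σ⁻¹ := by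
    rw [← mul_inv, Real.mul_self_sqrt hσ.le]
  simp only [metricMap, LinearMap.coe_mk, AddHom.coe_mk, EuclideanSpace.inner_toLp_toLp,
    star_trivial, sumElim_dotProduct_sumElim, smul_dotProduct, dotProduct_smul, smul_eq_mul, hR]
  rw [← mul_assoc, hs, dotProduct_comm (e.2.2 - _)]
  ring

/-- The optimality conditions tying one sweep's input `(z, w, x)` to its output
`(zb, wb, vb, xb)`.  A KKT point is exactly a point that is its own output. -/
structure SweepRel {m n : ℕ} (σ : ℝ) (f : (Fin m → ℝ) → ℝ) (r : (Fin n → ℝ) → ℝ)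
    (A : Matrix (Fin m) (Fin n) ℝ) (U : Matrix (Fin n) (Fin n) ℝ)
    (Tz : Matrix (Fin m) (Fin m) ℝ) (Tw : Matrix (Fin n) (Fin n) ℝ)
    (z : Fin m → ℝ) (w x : Fin n → ℝ) (zb : Fin m → ℝ) (wb vb xb : Fin n → ℝ) : Prop where
  hx : xb = x - σ • (Aᵀ *ᵥ z + Uᵀ *ᵥ w + vb)
  hr : IsSubgrad r xb vb
  hf : IsSubgrad f (A *ᵥ xb - σ • (A *ᵥ (Aᵀ *ᵥ zb + Uᵀ *ᵥ wb + vb)) + Tz *ᵥ (z - zb)) zb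
  hw : U *ᵥ xb - σ • (U *ᵥ (Aᵀ *ᵥ zb + Uᵀ *ᵥ wb + vb)) + Tw *ᵥ (w - wb) = 0

/-- Firm nonexpansiveness of the sweep in the degenerate metric: monotonicity of `∂f`, `∂r`,
and cancellation of the skew-symmetric coupling. -/
theorem SweepRel.monotone {m n : ℕ} {σ : ℝ} (hσ : 0 < σ) {f : (Fin m → ℝ) → ℝ}
    {r : (Fin n → ℝ) → ℝ}
    {A : Matrix (Fin m) (Fin n) ℝ} {U : Matrix (Fin n) (Fin n) ℝ}
    {Rz : Matrix (Fin m) (Fin m) ℝ} {Rw : Matrix (Fin n) (Fin n) ℝ}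
    {z zb z' zb' : Fin m → ℝ} {w x wb vb xb w' x' wb' vb' xb' : Fin n → ℝ}
    (h : SweepRel σ f r A U (Rzᵀ * Rz) (Rwᵀ * Rw) z w x zb wb vb xb)
    (h' : SweepRel σ f r A U (Rzᵀ * Rz) (Rwᵀ * Rw) z' w' x' zb' wb' vb' xb') :
    0 ≤ inner ℝ
      ((metricMap σ A U Rz Rw (z, w, x) - metricMap σ A U Rz Rw (zb, wb, xb)) -
        (metricMap σ A U Rz Rw (z', w', x') - metricMap σ A U Rz Rw (zb', wb', xb')))
      (metricMap σ A U Rz Rw (zb, wb, xb) - metricMap σ A U Rz Rw (zb', wb', xb')) := by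
  rw [← map_sub, ← map_sub, ← map_sub, ← map_sub, inner_metricMap hσ]
  simp only [Prod.mk_sub_mk]
  have h1 := h.hf.monotone h'.hf
  have h2 := h.hr.monotone h'.hr
  have h3 : (U *ᵥ xb - σ • (U *ᵥ (Aᵀ *ᵥ zb + Uᵀ *ᵥ wb + vb)) + (Rwᵀ * Rw) *ᵥ (w - wb)) -
      (U *ᵥ xb' - σ • (U *ᵥ (Aᵀ *ᵥ zb' + Uᵀ *ᵥ wb' + vb')) + (Rwᵀ * Rw) *ᵥ (w' - wb')) = 0 := by
    rw [h.hw, h'.hw, sub_zero]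
  obtain ⟨ez, hez⟩ : ∃ ez, ez = zb - zb' := ⟨_, rfl⟩
  obtain ⟨ew, hew⟩ : ∃ ew, ew = wb - wb' := ⟨_, rfl⟩
  obtain ⟨ex, hex⟩ : ∃ ex, ex = xb - xb' := ⟨_, rfl⟩
  obtain ⟨ev, hev⟩ : ∃ ev, ev = vb - vb' := ⟨_, rfl⟩
  obtain ⟨Q, hQ⟩ : ∃ Q, Q = Aᵀ *ᵥ ez + Uᵀ *ᵥ ew + ev := ⟨_, rfl⟩
  have hd : (x - xb - (x' - xb')) - σ • (Aᵀ *ᵥ (z - zb - (z' - zb')) +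
      Uᵀ *ᵥ (w - wb - (w' - wb'))) = σ • Q := by
    rw [hQ, hez, hew, hev, h.hx, h'.hx]
    simp only [mulVec_sub]
    module
  rw [hd]
  have hA : ∀ (q : Fin n → ℝ) (D : Fin m → ℝ), A *ᵥ q ⬝ᵥ D = q ⬝ᵥ (Aᵀ *ᵥ D) := fun q D => by
    rw [dotProduct_mulVec, vecMul_transpose]
  have hUm : ∀ (q : Fin n → ℝ) (D : Fin n → ℝ), U *ᵥ q ⬝ᵥ D = q ⬝ᵥ (Uᵀ *ᵥ D) := fun q D => by
    rw [dotProduct_mulVec, vecMul_transpose]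
  have e1 : (A *ᵥ xb - σ • (A *ᵥ (Aᵀ *ᵥ zb + Uᵀ *ᵥ wb + vb)) + (Rzᵀ * Rz) *ᵥ (z - zb)) -
      (A *ᵥ xb' - σ • (A *ᵥ (Aᵀ *ᵥ zb' + Uᵀ *ᵥ wb' + vb')) + (Rzᵀ * Rz) *ᵥ (z' - zb')) =
      A *ᵥ ex - σ • (A *ᵥ Q) + (Rzᵀ * Rz) *ᵥ (z - zb - (z' - zb')) := by
    rw [hQ, hez, hew, hev, hex]
    simp only [mulVec_sub, mulVec_add]
    module
  have e2 : (U *ᵥ xb - σ • (U *ᵥ (Aᵀ *ᵥ zb + Uᵀ *ᵥ wb + vb)) + (Rwᵀ * Rw) *ᵥ (w - wb)) -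
      (U *ᵥ xb' - σ • (U *ᵥ (Aᵀ *ᵥ zb' + Uᵀ *ᵥ wb' + vb')) + (Rwᵀ * Rw) *ᵥ (w' - wb')) =
      U *ᵥ ex - σ • (U *ᵥ Q) + (Rwᵀ * Rw) *ᵥ (w - wb - (w' - wb')) := by
    rw [hQ, hez, hew, hev, hex]
    simp only [mulVec_sub, mulVec_add]
    module
  rw [e1, ← hez] at h1
  rw [e2] at h3
  rw [← hex, ← hev] at h2
  rw [← hez, ← hew, ← hex]
  generalize (Rzᵀ * Rz) *ᵥ (z - zb - (z' - zb')) = P at *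
  generalize (Rwᵀ * Rw) *ᵥ (w - wb - (w' - wb')) = W at *
  have h4 := congrArg (fun y => y ⬝ᵥ ew) h3
  have h5 := congrArg (fun y => y ⬝ᵥ ex) hQ
  simp only [add_dotProduct, sub_dotProduct, smul_dotProduct, smul_eq_mul, hA, hUm,
    zero_dotProduct] at h1 h4 h5
  rw [smul_dotProduct, smul_eq_mul, ← mul_assoc, inv_mul_cancel₀ hσ.ne', one_mul,
    dotProduct_sub, dotProduct_smul, dotProduct_add, smul_eq_mul, h5,
    dotProduct_comm _ ex, dotProduct_comm _ ex, dotProduct_comm _ ex]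
  linarith

/-- If `v ∈ ∂r(x)` and `x + σ v = s`, then `x = prox_{σ r}(s)` is a 1-Lipschitz function of `s`; only
the monotonicity inequality of `∂r` enters. -/
theorem norm_sub_le_of_add_smul {n : ℕ} {σ : ℝ} (hσ : 0 < σ) {x v s x' v' s' : Fin n → ℝ}
    (hmono : 0 ≤ (x - x') ⬝ᵥ (v - v')) (hs : x + σ • v = s) (hs' : x' + σ • v' = s') :
    dist (WithLp.toLp 2 x) (WithLp.toLp 2 x') ≤ dist (WithLp.toLp 2 s) (WithLp.toLp 2 s') := by
  have key : ∀ y : Fin n → ℝ, ‖WithLp.toLp 2 y‖ ^ 2 = y ⬝ᵥ y := fun y => by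
    rw [← real_inner_self_eq_norm_sq, EuclideanSpace.inner_toLp_toLp, star_trivial]
  rw [dist_eq_norm, dist_eq_norm, ← WithLp.toLp_sub, ← WithLp.toLp_sub]
  refine (pow_le_pow_iff_left₀ (norm_nonneg _) (norm_nonneg _) two_ne_zero).1 ?_
  have e : s - s' = (x - x') + σ • (v - v') := by rw [← hs, ← hs']; module
  rw [key, key, e]
  have hvv : 0 ≤ (v - v') ⬝ᵥ (v - v') := by simpa using dotProduct_star_self_nonneg (v - v')
  generalize x - x' = a at *
  generalize v - v' = b at *
  simp only [add_dotProduct, dotProduct_add, smul_dotProduct, dotProduct_smul, smul_eq_mul,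
    dotProduct_comm b a]
  have : 0 ≤ σ * (a ⬝ᵥ b) := by positivity
  have : 0 ≤ σ * (σ * (b ⬝ᵥ b)) := by positivity
  linarith

theorem exists_transpose_mul_self {d : ℕ} {M : Matrix (Fin d) (Fin d) ℝ} (hM : M.PosSemidef) :
    ∃ R : Matrix (Fin d) (Fin d) ℝ, M = Rᵀ * R := by
  open scoped MatrixOrder in
  obtain ⟨R, hR⟩ := CStarAlgebra.nonneg_iff_eq_star_mul_self.mp hM.nonneg
  exact ⟨R, by rw [hR, star_eq_conjTranspose, conjTranspose_eq_transpose_of_trivial]⟩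

/-! ### Recovering the iterates and optimality of the limit -/

theorem TmatD_eq {m n : ℕ} {σ lU : ℝ} (hlU : 0 < lU) (A : Matrix (Fin m) (Fin n) ℝ)
    {U : Matrix (Fin n) (Fin n) ℝ} (hU : Uᵀ = U) (Sz : Matrix (Fin m) (Fin m) ℝ) :
    TmatD σ lU A U Sz = Matrix.fromBlocks
      (σ • Sz + (σ * lU⁻¹) • ((A * U) * (A * U)ᵀ)) 0 0
      (σ • (lU • (1 : Matrix (Fin n) (Fin n) ℝ) - U * U)) := by
  have hinv : (lU • (1 : Matrix (Fin n) (Fin n) ℝ))⁻¹ = lU⁻¹ • 1 := by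
    refine Matrix.inv_eq_left_inv ?_
    rw [smul_mul_smul_comm, inv_mul_cancel₀ hlU.ne', one_smul, one_mul]
  rw [TmatD, sub_add_cancel, hinv, transpose_mul, hU]
  simp only [Matrix.mul_smul, Matrix.smul_mul, Matrix.mul_one, smul_smul, Matrix.mul_assoc]

/-- The Hessian `T + σ B Bᵀ` of the `(z, w)`-subproblem, `Bᵀ (z, w) = Aᵀ z + Uᵀ w`, is
nonsingular. -/
theorem eq_zero_of_hessian {m n : ℕ} {σ lU : ℝ} (hσ : 0 < σ) (hlU : 0 < lU)
    {A : Matrix (Fin m) (Fin n) ℝ} {U : Matrix (Fin n) (Fin n) ℝ} (hU : Uᵀ = U)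
    {Sz : Matrix (Fin m) (Fin m) ℝ} (hSz : Sz.PosSemidef) (hSzA : (Sz + A * Aᵀ).PosDef)
    {z : Fin m → ℝ} {w : Fin n → ℝ}
    (h1 : (σ • Sz + (σ * lU⁻¹) • ((A * U) * (A * U)ᵀ)) *ᵥ z = 0)
    (h2 : (σ • (lU • (1 : Matrix (Fin n) (Fin n) ℝ) - U * U)) *ᵥ w = 0)
    (h3 : Aᵀ *ᵥ z + Uᵀ *ᵥ w = 0) : z = 0 ∧ w = 0 := by
  have hsq : ∀ {k : ℕ} (M : Matrix (Fin m) (Fin k) ℝ),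
      z ⬝ᵥ ((M * Mᵀ) *ᵥ z) = (Mᵀ *ᵥ z) ⬝ᵥ (Mᵀ *ᵥ z) := by
    intro k M
    rw [← mulVec_mulVec, dotProduct_mulVec, ← mulVec_transpose]
  have hz := congrArg (fun y => z ⬝ᵥ y) h1
  simp only [add_mulVec, smul_mulVec, dotProduct_add, dotProduct_smul, smul_eq_mul, hsq,
    dotProduct_zero] at hz
  have hS0 : 0 ≤ z ⬝ᵥ (Sz *ᵥ z) := by simpa using hSz.dotProduct_mulVec_nonneg z
  have hq0 : 0 ≤ ((A * U)ᵀ *ᵥ z) ⬝ᵥ ((A * U)ᵀ *ᵥ z) := by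
    simpa using dotProduct_star_self_nonneg ((A * U)ᵀ *ᵥ z)
  have hp1 : 0 ≤ σ * (z ⬝ᵥ (Sz *ᵥ z)) := by positivity
  have hp2 : 0 ≤ σ * lU⁻¹ * (((A * U)ᵀ *ᵥ z) ⬝ᵥ ((A * U)ᵀ *ᵥ z)) := by positivity
  have hS : z ⬝ᵥ (Sz *ᵥ z) = 0 := by
    have : σ * (z ⬝ᵥ (Sz *ᵥ z)) = 0 := by linarith
    exact (mul_eq_zero.1 this).resolve_left hσ.ne'
  have hq : (A * U)ᵀ *ᵥ z = 0 := by
    have : σ * lU⁻¹ * (((A * U)ᵀ *ᵥ z) ⬝ᵥ ((A * U)ᵀ *ᵥ z)) = 0 := by linarith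
    exact dotProduct_self_eq_zero.1 ((mul_eq_zero.1 this).resolve_left (by positivity))
  have hUU : (U * U) *ᵥ w = 0 := by
    have := congrArg (fun y => U *ᵥ y) h3
    simp only [mulVec_add, mulVec_zero, mulVec_mulVec, hU] at this
    rw [transpose_mul, hU] at hq
    rwa [hq, zero_add] at this
  have hw : w = 0 := by
    rw [smul_mulVec, sub_mulVec, hUU, sub_zero, smul_mulVec, one_mulVec, smul_smul] at h2
    exact (smul_eq_zero.1 h2).resolve_left (by positivity)
  refine ⟨?_, hw⟩
  rw [hw, mulVec_zero, add_zero] at h3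
  by_contra hz0
  have := hSzA.dotProduct_mulVec_pos hz0
  rw [star_trivial, add_mulVec, dotProduct_add, hS, hsq, h3] at this
  simp at this

open Filter Topology in
/-- An injective linear map out of a finite-dimensional space is a closed embedding, so it reflects
convergence. -/
theorem exists_tendsto_of_injective {E F : Type*} [NormedAddCommGroup E] [NormedSpace ℝ E]
    [FiniteDimensional ℝ E] [NormedAddCommGroup F] [NormedSpace ℝ F] (J : E →ₗ[ℝ] F)
    (hJ : ∀ y, J y = 0 → y = 0) {y : ℕ → E} {l : F}
    (h : Tendsto (fun k => J (y k)) atTop (𝓝 l)) : ∃ y', Tendsto y atTop (𝓝 y') := by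
  have hemb := LinearMap.isClosedEmbedding_of_injective (f := J) (LinearMap.ker_eq_bot'.2 hJ)
  obtain ⟨y', rfl⟩ := hemb.isClosed_range.mem_of_tendsto h (Eventually.of_forall fun k => ⟨_, rfl⟩)
  exact ⟨y', (hemb.isInducing.tendsto_nhds_iff).2 h⟩

/-- Strong duality at a KKT point: both optimality claims follow by adding the two subgradient
(respectively Fenchel–Young) inequalities. -/
theorem optimal_of_kkt {m n : ℕ} {A : Matrix (Fin m) (Fin n) ℝ} {U : Matrix (Fin n) (Fin n) ℝ}
    {f : (Fin m → ℝ) → ℝ} {r : (Fin n → ℝ) → ℝ} {z : Fin m → ℝ} {w v x : Fin n → ℝ}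
    (hf : IsSubgrad f (A *ᵥ x) z) (hr : IsSubgrad r x v) (hx : U *ᵥ x = 0)
    (hz : Aᵀ *ᵥ z + Uᵀ *ᵥ w + v = 0) :
    (∀ (z' : Fin m → ℝ) (w' v' : Fin n → ℝ), Aᵀ *ᵥ z' + Uᵀ *ᵥ w' + v' = 0 →
        fconj f z + fconj r v ≤ fconj f z' + fconj r v') ∧
      ∀ x' : Fin n → ℝ, U *ᵥ x' = 0 → f (A *ᵥ x) + r x ≤ f (A *ᵥ x') + r x' := by
  have hdual : ∀ (z' : Fin m → ℝ) (w' v' x' : Fin n → ℝ), Aᵀ *ᵥ z' + Uᵀ *ᵥ w' + v' = 0 →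
      U *ᵥ x' = 0 → z' ⬝ᵥ (A *ᵥ x') + v' ⬝ᵥ x' = 0 := by
    intro z' w' v' x' h hx'
    have h1 := congrArg (fun y => y ⬝ᵥ x') h
    simp only [add_dotProduct, zero_dotProduct, mulVec_transpose, ← dotProduct_mulVec, hx',
      dotProduct_zero, add_zero] at h1
    exact h1
  constructor
  · intro z' w' v' h
    have h1 : ((z' ⬝ᵥ (A *ᵥ x) - f (A *ᵥ x) : ℝ) : EReal) ≤ fconj f z' :=
      le_iSup (fun y : Fin m → ℝ => ((z' ⬝ᵥ y - f y : ℝ) : EReal)) _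
    have h2 : ((v' ⬝ᵥ x - r x : ℝ) : EReal) ≤ fconj r v' :=
      le_iSup (fun y : Fin n → ℝ => ((v' ⬝ᵥ y - r y : ℝ) : EReal)) _
    refine (add_le_add (fconj_le_of_isSubgrad hf) (fconj_le_of_isSubgrad hr)).trans
      (le_trans ?_ (add_le_add h1 h2))
    rw [← EReal.coe_add, ← EReal.coe_add, EReal.coe_le_coe_iff]
    linarith [hdual z w v x hz hx, hdual z' w' v' x h hx]
  · intro x' hx'
    have h1 := hf (A *ᵥ x')
    have h2 := hr x'
    rw [dotProduct_sub] at h1 h2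
    linarith [hdual z w v x hz hx, hdual z w v x' hz hx']

/-! ### Convergence of dHPR -/

open Filter Topology in
/-- **Convergence of dHPR (Theorem 1).**  Under the dHPR setup, if a KKT point exists, then the
barred dHPR iterates `(z̄ᵏ, Uᵀw̄ᵏ, v̄ᵏ, x̄ᵏ)` converge to `(z∞, Uᵀw∞, v∞, x∞)` where
`(z∞, w∞, v∞)` solves the dual problem and `x∞` solves the consensus primal problem. -/
theorem dHPR_convergence
    (m n : ℕ) (σ : ℝ) (hσ : 0 < σ)
    (A : Matrix (Fin m) (Fin n) ℝ)
    (U : Matrix (Fin n) (Fin n) ℝ) (hU : U.PosSemidef)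
    (f : (Fin m → ℝ) → ℝ) (hf : ConvexOn ℝ Set.univ f)
    (r : (Fin n → ℝ) → ℝ) (hr : ConvexOn ℝ Set.univ r)
    (Sz : Matrix (Fin m) (Fin m) ℝ) (hSz : Sz.PosSemidef)
    (hSzA : (Sz + A * Aᵀ).PosDef)
    (lU : ℝ) (hlU : 0 < lU)
    (hSw : (lU • (1 : Matrix (Fin n) (Fin n) ℝ) - U * U).PosSemidef)
    -- a KKT point `u* = (z*, w*, v*, x*)`
    (zs : Fin m → ℝ) (ws vs xs : Fin n → ℝ)
    (hkkt1 : ∀ y : Fin m → ℝ,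
      f (A *ᵥ xs) + 1 / 2 * euclNorm (A *ᵥ xs - (zs + A *ᵥ xs)) ^ 2
        ≤ f y + 1 / 2 * euclNorm (y - (zs + A *ᵥ xs)) ^ 2)
    (hkkt2 : U *ᵥ xs = 0)
    (hkkt3 : ∀ y : Fin n → ℝ,
      r xs + 1 / 2 * euclNorm (xs - (vs + xs)) ^ 2
        ≤ r y + 1 / 2 * euclNorm (y - (vs + xs)) ^ 2)
    (hkkt4 : Aᵀ *ᵥ zs + Uᵀ *ᵥ ws + vs = 0)
    -- a dHPR trajectory `{uᵏ}, {ūᵏ}` with initial point `u⁰`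
    (z zb : ℕ → Fin m → ℝ) (w wb v vb x xb : ℕ → Fin n → ℝ)
    (hv : ∀ (k : ℕ) (v' : Fin n → ℝ),
      vObj σ r A U (x k) (z k) (w k) (vb (k + 1)) ≤ vObj σ r A U (x k) (z k) (w k) v')
    (hx : ∀ k : ℕ, xb (k + 1) = x k - σ • (Aᵀ *ᵥ z k + Uᵀ *ᵥ w k + vb (k + 1)))
    (hzw : ∀ (k : ℕ) (z' : Fin m → ℝ) (w' : Fin n → ℝ),
      zwObj σ f A U (TmatD σ lU A U Sz) (xb (k + 1)) (vb (k + 1)) (z k) (w k)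
          (zb (k + 1)) (wb (k + 1))
        ≤ zwObj σ f A U (TmatD σ lU A U Sz) (xb (k + 1)) (vb (k + 1)) (z k) (w k) z' w')
    (hupd : ∀ k : ℕ,
      z (k + 1) = ((k : ℝ) + 2)⁻¹ • z 0 +
          (((k : ℝ) + 1) / ((k : ℝ) + 2)) • ((2 : ℝ) • zb (k + 1) - z k) ∧
      w (k + 1) = ((k : ℝ) + 2)⁻¹ • w 0 +
          (((k : ℝ) + 1) / ((k : ℝ) + 2)) • ((2 : ℝ) • wb (k + 1) - w k) ∧
      v (k + 1) = ((k : ℝ) + 2)⁻¹ • v 0 +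
          (((k : ℝ) + 1) / ((k : ℝ) + 2)) • ((2 : ℝ) • vb (k + 1) - v k) ∧
      x (k + 1) = ((k : ℝ) + 2)⁻¹ • x 0 +
          (((k : ℝ) + 1) / ((k : ℝ) + 2)) • ((2 : ℝ) • xb (k + 1) - x k)) :
    ∃ (zi : Fin m → ℝ) (wi vi xi : Fin n → ℝ),
      Filter.Tendsto (fun k => (zb k, Uᵀ *ᵥ wb k, vb k, xb k)) Filter.atTop
        (nhds (zi, Uᵀ *ᵥ wi, vi, xi)) ∧
      -- (a) `(z∞, w∞, v∞)` solves the dual problem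
      (Aᵀ *ᵥ zi + Uᵀ *ᵥ wi + vi = 0 ∧
        ∀ (z' : Fin m → ℝ) (w' v' : Fin n → ℝ), Aᵀ *ᵥ z' + Uᵀ *ᵥ w' + v' = 0 →
          fconj f zi + fconj r vi ≤ fconj f z' + fconj r v') ∧
      -- (b) `x∞` solves the consensus primal problem
      (U *ᵥ xi = 0 ∧
        ∀ x' : Fin n → ℝ, U *ᵥ x' = 0 → f (A *ᵥ xi) + r xi ≤ f (A *ᵥ x') + r x') := by
  have hUt : Uᵀ = U := by
    simpa [conjTranspose_eq_transpose_of_trivial] using hU.1.eq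
  obtain ⟨Tz, hTzdef⟩ : ∃ Tz, Tz = σ • Sz + (σ * lU⁻¹) • ((A * U) * (A * U)ᵀ) := ⟨_, rfl⟩
  obtain ⟨Tw, hTwdef⟩ : ∃ Tw, Tw = σ • (lU • (1 : Matrix (Fin n) (Fin n) ℝ) - U * U) := ⟨_, rfl⟩
  have hTzpsd : Tz.PosSemidef := by
    rw [hTzdef, ← conjTranspose_eq_transpose_of_trivial (A * U)]
    exact (hSz.smul hσ.le).add ((posSemidef_self_mul_conjTranspose (A * U)).smul (by positivity))
  have hTwpsd : Tw.PosSemidef := by rw [hTwdef]; exact hSw.smul hσ.le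
  have hTzt : Tzᵀ = Tz := by
    simpa [conjTranspose_eq_transpose_of_trivial] using hTzpsd.1.eq
  have hTwt : Twᵀ = Tw := by
    simpa [conjTranspose_eq_transpose_of_trivial] using hTwpsd.1.eq
  rw [TmatD_eq hlU A hUt Sz, ← hTzdef, ← hTwdef] at hzw
  have hfs : IsSubgrad f (A *ᵥ xs) zs := isSubgrad_of_prox hf rfl hkkt1
  have hrs : IsSubgrad r xs vs := isSubgrad_of_prox hr rfl hkkt3
  have hfinf : ∃ z₀, fconj f z₀ ≠ ⊤ :=
    ⟨zs, ne_top_of_le_ne_top (EReal.coe_ne_top _) (fconj_le_of_isSubgrad hfs)⟩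
  have hfinr : ∃ v₀, fconj r v₀ ≠ ⊤ :=
    ⟨vs, ne_top_of_le_ne_top (EReal.coe_ne_top _) (fconj_le_of_isSubgrad hrs)⟩
  have hsweep : ∀ k, SweepRel σ f r A U Tz Tw (z k) (w k) (x k)
      (zb (k + 1)) (wb (k + 1)) (vb (k + 1)) (xb (k + 1)) := by
    intro k
    have h1 := vObj_optimality hr hfinr (hv k)
    have h2 := zwObj_optimality hf hfinf hTzt hTwt (hzw k)
    rw [← hx k] at h1
    exact ⟨hx k, h1, h2.1, h2.2⟩
  have hstar : SweepRel σ f r A U Tz Tw zs ws xs zs ws vs xs := by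
    refine ⟨?_, hrs, ?_, ?_⟩ <;> rw [hkkt4]
    · simp
    · simpa using hfs
    · simp [hkkt2]
  obtain ⟨Rz, hRz⟩ := exists_transpose_mul_self hTzpsd
  obtain ⟨Rw, hRw⟩ := exists_transpose_mul_self hTwpsd
  rw [hRz, hRw] at hsweep hstar
  -- Halpern iteration for the images under `metricMap`
  obtain ⟨p, hap, hbp⟩ := halpern
    (fun k => metricMap σ A U Rz Rw (z k, w k, x k))
    (fun k => metricMap σ A U Rz Rw (zb (k + 1), wb (k + 1), xb (k + 1)))
    (fun j k => (hsweep k).monotone hσ (hsweep j))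
    (metricMap σ A U Rz Rw (zs, ws, xs))
    (fun k => by simpa using (hsweep k).monotone hσ hstar)
    (fun k => by
      simp only [← map_smul, ← map_sub, ← map_add]
      obtain ⟨h1, h2, -, h4⟩ := hupd k
      rw [h1, h2, h4]
      rfl)
  have hofLp : Continuous (WithLp.ofLp : EuclideanSpace ℝ (Fin m ⊕ (Fin n ⊕ Fin n)) → _) :=
    PiLp.continuous_ofLp 2 _
  have hap' := (hofLp.tendsto p).comp hap
  have hbp' := (hofLp.tendsto p).comp hbp
  have hsσ : Real.sqrt σ ≠ 0 := (Real.sqrt_pos.2 hσ).ne'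
  obtain ⟨pz, hpz⟩ : ∃ pz : Fin m → ℝ, pz = fun i => p.ofLp (Sum.inl i) := ⟨_, rfl⟩
  obtain ⟨pw, hpw⟩ : ∃ pw : Fin n → ℝ, pw = fun i => p.ofLp (Sum.inr (Sum.inl i)) := ⟨_, rfl⟩
  obtain ⟨ps, hps⟩ : ∃ ps : Fin n → ℝ, ps = fun i => p.ofLp (Sum.inr (Sum.inr i)) := ⟨_, rfl⟩
  have haz : Tendsto (fun k => Rz *ᵥ z k) atTop (𝓝 pz) := by
    rw [hpz, tendsto_pi_nhds]; exact fun i => (tendsto_pi_nhds.1 hap') (Sum.inl i)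
  have hbz : Tendsto (fun k => Rz *ᵥ zb (k + 1)) atTop (𝓝 pz) := by
    rw [hpz, tendsto_pi_nhds]; exact fun i => (tendsto_pi_nhds.1 hbp') (Sum.inl i)
  have haw : Tendsto (fun k => Rw *ᵥ w k) atTop (𝓝 pw) := by
    rw [hpw, tendsto_pi_nhds]; exact fun i => (tendsto_pi_nhds.1 hap') (Sum.inr (Sum.inl i))
  have hbw : Tendsto (fun k => Rw *ᵥ wb (k + 1)) atTop (𝓝 pw) := by
    rw [hpw, tendsto_pi_nhds]; exact fun i => (tendsto_pi_nhds.1 hbp') (Sum.inr (Sum.inl i))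
  have has : Tendsto (fun k => x k - σ • (Aᵀ *ᵥ z k + Uᵀ *ᵥ w k)) atTop
      (𝓝 (Real.sqrt σ • ps)) := by
    have : Tendsto (fun k => (Real.sqrt σ)⁻¹ • (x k - σ • (Aᵀ *ᵥ z k + Uᵀ *ᵥ w k))) atTop
        (𝓝 ps) := by
      rw [hps, tendsto_pi_nhds]; exact fun i => (tendsto_pi_nhds.1 hap') (Sum.inr (Sum.inr i))
    simpa [smul_smul, hsσ] using this.const_smul (Real.sqrt σ)
  have hbs : Tendsto (fun k => xb (k + 1) - σ • (Aᵀ *ᵥ zb (k + 1) + Uᵀ *ᵥ wb (k + 1))) atTop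
      (𝓝 (Real.sqrt σ • ps)) := by
    have : Tendsto (fun k => (Real.sqrt σ)⁻¹ •
        (xb (k + 1) - σ • (Aᵀ *ᵥ zb (k + 1) + Uᵀ *ᵥ wb (k + 1)))) atTop (𝓝 ps) := by
      rw [hps, tendsto_pi_nhds]; exact fun i => (tendsto_pi_nhds.1 hbp') (Sum.inr (Sum.inr i))
    simpa [smul_smul, hsσ] using this.const_smul (Real.sqrt σ)
  -- `x̄` is a 1-Lipschitz function of `x - σ (Aᵀ z + Uᵀ w)`, hence Cauchy
  have hsplit : ∀ k, xb (k + 1) + σ • vb (k + 1) = x k - σ • (Aᵀ *ᵥ z k + Uᵀ *ᵥ w k) := by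
    intro k; rw [hx k]; module
  obtain ⟨xi, hxi⟩ : ∃ xi, Tendsto (fun k => xb (k + 1)) atTop (𝓝 xi) := by
    have h1 := (((PiLp.continuous_toLp 2 (fun _ : Fin n => ℝ)).tendsto _).comp has).cauchySeq
    have h2 : CauchySeq fun k => WithLp.toLp 2 (xb (k + 1)) := by
      rw [Metric.cauchySeq_iff] at h1 ⊢
      intro ε hε
      obtain ⟨N, hN⟩ := h1 ε hε
      exact ⟨N, fun i hi j hj => (norm_sub_le_of_add_smul hσ
        ((hsweep i).hr.monotone (hsweep j).hr) (hsplit i) (hsplit j)).trans_lt (hN i hi j hj)⟩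
    obtain ⟨l, hl⟩ := cauchySeq_tendsto_of_complete h2
    exact ⟨l.ofLp, ((PiLp.continuous_ofLp 2 (fun _ : Fin n => ℝ)).tendsto _).comp hl⟩
  obtain ⟨vi, hvi⟩ : ∃ vi, Tendsto (fun k => vb (k + 1)) atTop (𝓝 vi) := by
    refine ⟨_, ((has.sub hxi).const_smul σ⁻¹).congr fun k => ?_⟩
    rw [← hsplit k, add_sub_cancel_left, smul_smul, inv_mul_cancel₀ hσ.ne', one_smul]
  have hB : Tendsto (fun k => Aᵀ *ᵥ zb (k + 1) + Uᵀ *ᵥ wb (k + 1)) atTop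
      (𝓝 (σ⁻¹ • (xi - Real.sqrt σ • ps))) := by
    refine ((hxi.sub hbs).const_smul σ⁻¹).congr fun k => ?_
    rw [sub_sub_cancel, smul_smul, inv_mul_cancel₀ hσ.ne', one_smul]
  -- nonsingularity of the `(z, w)`-Hessian recovers `z̄` and `w̄`
  obtain ⟨⟨zi, wi⟩, hyi⟩ : ∃ y', Tendsto (fun k => (zb (k + 1), wb (k + 1))) atTop (𝓝 y') := by
    refine exists_tendsto_of_injective
      ((Rz.mulVecLin ∘ₗ LinearMap.fst ℝ _ _).prod ((Rw.mulVecLin ∘ₗ LinearMap.snd ℝ _ _).prod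
        (Aᵀ.mulVecLin ∘ₗ LinearMap.fst ℝ _ _ + Uᵀ.mulVecLin ∘ₗ LinearMap.snd ℝ _ _)))
      ?_ (hbz.prodMk_nhds (hbw.prodMk_nhds hB))
    rintro ⟨a, b⟩ hab
    have h1 : Rz *ᵥ a = 0 := congrArg Prod.fst hab
    have h2 : Rw *ᵥ b = 0 := congrArg (fun q => q.2.1) hab
    have h3 : Aᵀ *ᵥ a + Uᵀ *ᵥ b = 0 := congrArg (fun q => q.2.2) hab
    have := eq_zero_of_hessian hσ hlU hUt hSz hSzA (z := a) (w := b)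
      (by rw [← hTzdef, hRz, ← mulVec_mulVec, h1, mulVec_zero])
      (by rw [← hTwdef, hRw, ← mulVec_mulVec, h2, mulVec_zero]) h3
    rw [this.1, this.2]; rfl
  have hzi : Tendsto (fun k => zb (k + 1)) atTop (𝓝 zi) := (continuous_fst.tendsto _).comp hyi
  have hwi : Tendsto (fun k => wb (k + 1)) atTop (𝓝 wi) := (continuous_snd.tendsto _).comp hyi
  have hmul : ∀ {c d : ℕ} (M : Matrix (Fin c) (Fin d) ℝ) {y : ℕ → Fin d → ℝ} {y' : Fin d → ℝ},
      Tendsto y atTop (𝓝 y') → Tendsto (fun k => M *ᵥ y k) atTop (𝓝 (M *ᵥ y')) :=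
    fun M _ _ h => ((continuous_const.matrix_mulVec continuous_id).tendsto _).comp h
  -- the dual residual equals `σ⁻¹` times the gap between two sequences with a common limit
  have hQ0 : Tendsto (fun k => Aᵀ *ᵥ zb (k + 1) + Uᵀ *ᵥ wb (k + 1) + vb (k + 1)) atTop
      (𝓝 0) := by
    have h0 := (has.sub hbs).const_smul σ⁻¹
    rw [sub_self, smul_zero] at h0
    refine h0.congr fun k => ?_
    have : x k - σ • (Aᵀ *ᵥ z k + Uᵀ *ᵥ w k) -
        (xb (k + 1) - σ • (Aᵀ *ᵥ zb (k + 1) + Uᵀ *ᵥ wb (k + 1))) =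
        σ • (Aᵀ *ᵥ zb (k + 1) + Uᵀ *ᵥ wb (k + 1) + vb (k + 1)) := by
      rw [← hsplit k]; module
    rw [this, smul_smul, inv_mul_cancel₀ hσ.ne', one_smul]
  have hfeas : Aᵀ *ᵥ zi + Uᵀ *ᵥ wi + vi = 0 :=
    tendsto_nhds_unique (((hmul Aᵀ hzi).add (hmul Uᵀ hwi)).add hvi) hQ0
  have hTz0 : Tendsto (fun k => (Rzᵀ * Rz) *ᵥ (z k - zb (k + 1))) atTop (𝓝 0) := by
    have := hmul Rzᵀ (haz.sub hbz)
    rw [sub_self, mulVec_zero] at this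
    refine this.congr fun k => ?_
    rw [← mulVec_mulVec, mulVec_sub Rz]
  have hTw0 : Tendsto (fun k => (Rwᵀ * Rw) *ᵥ (w k - wb (k + 1))) atTop (𝓝 0) := by
    have := hmul Rwᵀ (haw.sub hbw)
    rw [sub_self, mulVec_zero] at this
    refine this.congr fun k => ?_
    rw [← mulVec_mulVec, mulVec_sub Rw]
  have hri : IsSubgrad r xi vi := isSubgrad_of_tendsto hr (fun k => (hsweep k).hr) hxi hvi
  have hfi : IsSubgrad f (A *ᵥ xi) zi := by
    refine isSubgrad_of_tendsto hf (fun k => (hsweep k).hf) ?_ hzi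
    have := ((hmul A hxi).sub ((hmul A hQ0).const_smul σ)).add hTz0
    simpa using this
  have hUi : U *ᵥ xi = 0 := by
    have h1 := ((hmul U hxi).sub ((hmul U hQ0).const_smul σ)).add hTw0
    simp only [mulVec_zero, smul_zero, sub_zero, add_zero] at h1
    exact tendsto_nhds_unique h1 (tendsto_const_nhds.congr fun k => ((hsweep k).hw).symm)
  have hopt := optimal_of_kkt hfi hri hUi hfeas
  refine ⟨zi, wi, vi, xi, ?_, ⟨hfeas, hopt.1⟩, hUi, hopt.2⟩
  rw [← tendsto_add_atTop_iff_nat 1]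
  exact hzi.prodMk_nhds ((hmul Uᵀ hwi).prodMk_nhds (hvi.prodMk_nhds hxi))
end
end

section
/- Let σ > 0, let A ∈ ℝ^{m×n}, let U ∈ ℝ^{n×n} be symmetric, and let S_z ∈ ℝ^{m×m}, S_w ∈ ℝ^{n×n} be symmetric positive semidefinite matrices with S_w + U² positive definite. Let f : ℝ^m → ℝ be convex, let θ := f* : ℝ^m → EReal be its Fenchel conjugate, and assume θ is proper (θ(z₀) < +∞ for some z₀ ∈ ℝ^m). Fix v̄, x̄, w⁰ ∈ ℝ^n and z⁰ ∈ ℝ^m, set Ŝ_z := σ·A·U·(S_w + U²)⁻¹·U·Aᵀ, and define the EReal-valued function Φ(z, w) := θ(z) + ( −⟨x̄, Aᵀz + Uᵀw⟩ + (σ/2)‖Aᵀz + Uᵀw + v̄‖² ). Then (z̄, w̄) ∈ ℝ^m × ℝ^n minimizes the joint objective Ψ(z, w) := Φ(z, w) + (σ/2)⟨z − z⁰, S_z(z − z⁰)⟩ + (1/2)⟨z − z⁰, Ŝ_z(z − z⁰)⟩ + (σ/2)⟨w − w⁰, S_w(w − w⁰)⟩ over ℝ^m × ℝ^n if and only if there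 exists w½ ∈ ℝ^n such that: (a) w½ minimizes w ↦ −⟨x̄, Uᵀw⟩ + (σ/2)‖Aᵀz⁰ + Uᵀw + v̄‖² + (σ/2)⟨w − w⁰, S_w(w − w⁰)⟩ over ℝ^n; (b) z̄ minimizes z ↦ Φ(z, w½) + (σ/2)⟨z − z⁰, S_z(z − z⁰)⟩ over ℝ^m; and (c) w̄ minimizes w ↦ −⟨x̄, Uᵀw⟩ + (σ/2)‖Aᵀz̄ + Uᵀw + v̄‖² + (σ/2)⟨w − w⁰, S_w(w − w⁰)⟩ over ℝ^n. -/
/-!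
Completing the square in `w`: the smooth part of the objective is, for fixed `z`, a quadratic in
`w` with Hessian `σ • M`, `M = Sw + U * U` positive definite, so it equals its value at its unique
minimizer `k z` plus `σ / 2 * ⟪w - k z, M (w - k z)⟫` (`wObj_complete_square`). The minimizer is
affine in `z`: `k z = k z0 - M⁻¹ U Aᵀ (z - z0)`. Evaluating the square at `w = k z0` gives exactly
`1 / 2 * ⟪z - z0, Shatz (z - z0)⟫`; hence adding the sGS proximal term to the partial minimum over
`w` produces the `z`-objective frozen at `w = k z0`. Consequently, up to a constant, the joint
objective at `(z, w)` is the `z`-subproblem objective at `z` plus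
`σ / 2 * ⟪w - k z, M (w - k z)⟫`. A joint minimizer is therefore a minimizer of the `z`-subproblem
together with `w = k z`. Apart from these real identities, only cancellation of finite values in
`EReal` is needed (`EReal_add_cases`); the conjugate is finite at a joint minimizer because it is
finite somewhere.
-/

open Matrix

noncomputable section

/-- `w`-dependent part of the objective, with `y` standing for `Aᵀ z`. -/
def wObj {n : ℕ} (σ : ℝ) (U Sw : Matrix (Fin n) (Fin n) ℝ) (x v w0 y w : Fin n → ℝ) : ℝ :=
  -(x ⬝ᵥ (U *ᵥ w)) + σ / 2 * ((y + U *ᵥ w + v) ⬝ᵥ (y + U *ᵥ w + v)) +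
    σ / 2 * ((w - w0) ⬝ᵥ (Sw *ᵥ (w - w0)))

theorem dot_symm {n : ℕ} {S : Matrix (Fin n) (Fin n) ℝ} (hS : Sᵀ = S) (a b : Fin n → ℝ) :
    a ⬝ᵥ (S *ᵥ b) = b ⬝ᵥ (S *ᵥ a) := by
  rw [dotProduct_mulVec, ← mulVec_transpose, hS, dotProduct_comm]

/-- Completing the square around a stationary point `k`; `hk` says that the gradient of `wObj`
vanishes at `k`. -/
theorem wObj_complete_square {n : ℕ} (σ : ℝ) (hσ : σ ≠ 0) (U Sw : Matrix (Fin n) (Fin n) ℝ)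
    (hU : Uᵀ = U) (hS : Swᵀ = Sw) (x v w0 y k w : Fin n → ℝ)
    (hk : (Sw + U * U) *ᵥ k = σ⁻¹ • (U *ᵥ x) + Sw *ᵥ w0 - U *ᵥ (y + v)) :
    wObj σ U Sw x v w0 y w =
      wObj σ U Sw x v w0 y k + σ / 2 * ((w - k) ⬝ᵥ ((Sw + U * U) *ᵥ (w - k))) := by
  obtain ⟨h, rfl⟩ : ∃ h, w = k + h := ⟨w - k, by simp⟩
  have hgrad := congrArg (fun t => σ * (h ⬝ᵥ t)) hk
  simp only [add_mulVec, ← mulVec_mulVec, dotProduct_add, dotProduct_sub, dotProduct_smul,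
    smul_eq_mul, mulVec_add] at hgrad
  have e1 : σ * (σ⁻¹ * h ⬝ᵥ (U *ᵥ x)) = h ⬝ᵥ (U *ᵥ x) := by field_simp
  rw [dot_symm hU h (U *ᵥ k), dot_symm hU h y, dot_symm hU h v, mul_sub, mul_add σ (_ * _), e1,
    dot_symm hU h x] at hgrad
  have e2 : k + h - k = h := by simp
  unfold wObj
  rw [e2]
  simp only [add_mulVec, ← mulVec_mulVec, dotProduct_add, add_dotProduct, dotProduct_sub,
    sub_dotProduct, mulVec_add, mulVec_sub]
  rw [dot_symm hU h (U *ᵥ h), dotProduct_comm v y, dotProduct_comm (U *ᵥ h) y,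
    dotProduct_comm (U *ᵥ k) y, dotProduct_comm (U *ᵥ k) v, dotProduct_comm (U *ᵥ h) v,
    dotProduct_comm (U *ᵥ h) (U *ᵥ k), dot_symm hS w0 h, dot_symm hS k h]
  rw [dotProduct_comm (U *ᵥ k) (U *ᵥ h), dotProduct_comm y, dotProduct_comm v] at hgrad
  simp only [dotProduct_comm (U *ᵥ h)] at hgrad ⊢
  linear_combination hgrad

/-- An inequality between extended values with real shifts persists under a change of the shifts
that increases the right-hand total by at least as much as the left-hand one. Infinite `s` or `t`
are allowed. -/
theorem EReal_add_cases {s t : EReal} {a b c d a' b' c' d' : ℝ}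
    (hle : s + (a : EReal) + (b : EReal) ≤ t + (c : EReal) + (d : EReal))
    (h : a' + b' - (a + b) ≤ c' + d' - (c + d)) :
    s + (a' : EReal) + (b' : EReal) ≤ t + (c' : EReal) + (d' : EReal) := by
  induction s <;> induction t
  case coe.coe s t =>
    norm_cast at hle ⊢
    linarith
  all_goals simp_all [← EReal.coe_add]

/-- **sGS decomposition (Proposition 1, equivalence part).**  Minimizing the joint `(z,w)`
objective with the sGS proximal term is equivalent to a `w → z → w` Gauss–Seidel sweep. -/
theorem sGS_decomposition
    (m n : ℕ) (σ : ℝ) (hσ : 0 < σ)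
    (A : Matrix (Fin m) (Fin n) ℝ)
    (U : Matrix (Fin n) (Fin n) ℝ) (hUsym : Uᵀ = U)
    (Sz : Matrix (Fin m) (Fin m) ℝ) (hSz : Sz.PosSemidef)
    (Sw : Matrix (Fin n) (Fin n) ℝ) (hSw : Sw.PosSemidef)
    (hSwU : (Sw + U * U).PosDef)
    (f : (Fin m → ℝ) → ℝ) (hf : ConvexOn ℝ Set.univ f)
    -- θ := f* is proper
    (hproper_ne_bot : ∀ zq : Fin m → ℝ, fconj f zq ≠ ⊥)
    (z₀ : Fin m → ℝ) (hproper_fin : fconj f z₀ < ⊤)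
    (vbar xbar w0 : Fin n → ℝ) (z0 : Fin m → ℝ)
    (zbar : Fin m → ℝ) (wbar : Fin n → ℝ) :
    -- Ŝ_z
    let Shatz : Matrix (Fin m) (Fin m) ℝ := σ • (A * U * (Sw + U * U)⁻¹ * U * Aᵀ)
    -- Φ(z, w)
    let Φ : (Fin m → ℝ) → (Fin n → ℝ) → EReal := fun zq wq =>
      fconj f zq +
        ((-(xbar ⬝ᵥ (Aᵀ *ᵥ zq + Uᵀ *ᵥ wq)) +
          σ / 2 * euclNorm (Aᵀ *ᵥ zq + Uᵀ *ᵥ wq + vbar) ^ 2 : ℝ) : EReal)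
    -- Ψ(z, w)
    let Ψ : (Fin m → ℝ) → (Fin n → ℝ) → EReal := fun zq wq =>
      Φ zq wq +
        ((σ / 2 * ((zq - z0) ⬝ᵥ (Sz *ᵥ (zq - z0))) +
          1 / 2 * ((zq - z0) ⬝ᵥ (Shatz *ᵥ (zq - z0))) +
          σ / 2 * ((wq - w0) ⬝ᵥ (Sw *ᵥ (wq - w0))) : ℝ) : EReal)
    -- the two real-valued `w`-subproblem objectives
    let Fw : (Fin m → ℝ) → (Fin n → ℝ) → ℝ := fun zq wq =>
      -(xbar ⬝ᵥ (Uᵀ *ᵥ wq)) + σ / 2 * euclNorm (Aᵀ *ᵥ zq + Uᵀ *ᵥ wq + vbar) ^ 2 +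
        σ / 2 * ((wq - w0) ⬝ᵥ (Sw *ᵥ (wq - w0)))
    ((∀ (zq : Fin m → ℝ) (wq : Fin n → ℝ), Ψ zbar wbar ≤ Ψ zq wq) ↔
      ∃ wh : Fin n → ℝ,
        -- (a) first `w`-update
        (∀ wq : Fin n → ℝ, Fw z0 wh ≤ Fw z0 wq) ∧
        -- (b) `z`-update
        (∀ zq : Fin m → ℝ,
          Φ zbar wh + ((σ / 2 * ((zbar - z0) ⬝ᵥ (Sz *ᵥ (zbar - z0))) : ℝ) : EReal) ≤
            Φ zq wh + ((σ / 2 * ((zq - z0) ⬝ᵥ (Sz *ᵥ (zq - z0))) : ℝ) : EReal)) ∧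
        -- (c) second `w`-update
        (∀ wq : Fin n → ℝ, Fw zbar wbar ≤ Fw zbar wq)) := by
  intro Shatz Φ Ψ Fw
  set M := Sw + U * U with hM
  have hSs : Swᵀ = Sw := by simpa using hSw.isHermitian.eq
  have hMdet : IsUnit M.det := isUnit_iff_ne_zero.mpr hSwU.det_pos.ne'
  have hMinv : ∀ r : Fin n → ℝ, M *ᵥ (M⁻¹ *ᵥ r) = r := fun r => by
    rw [mulVec_mulVec, mul_nonsing_inv _ hMdet, one_mulVec]
  have hMnn : ∀ h : Fin n → ℝ, 0 ≤ h ⬝ᵥ (M *ᵥ h) := fun h => by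
    simpa using hSwU.posSemidef.dotProduct_mulVec_nonneg h
  have hMpos : ∀ h : Fin n → ℝ, h ⬝ᵥ (M *ᵥ h) ≤ 0 → h = 0 := fun h hh => by
    by_contra hne
    have := hSwU.dotProduct_mulVec_pos hne
    simp only [star_trivial] at this
    linarith
  -- `k z` is the stationary point of the `w`-subproblem at `z`.
  let k : (Fin m → ℝ) → (Fin n → ℝ) := fun z =>
    M⁻¹ *ᵥ (σ⁻¹ • (U *ᵥ xbar) + Sw *ᵥ w0 - U *ᵥ (Aᵀ *ᵥ z + vbar))
  have hFw : ∀ z w, Fw z w = wObj σ U Sw xbar vbar w0 (Aᵀ *ᵥ z) w := fun z w => by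
    simp only [Fw, wObj, euclNorm_sq, hUsym]
  have hsq : ∀ z w, Fw z w = Fw z (k z) + σ / 2 * ((w - k z) ⬝ᵥ (M *ᵥ (w - k z))) :=
    fun z w => by
      rw [hFw, hFw]
      exact wObj_complete_square σ hσ.ne' U Sw hUsym hSs _ _ _ _ _ _ (hMinv _)
  have hkmin : ∀ z w, Fw z (k z) ≤ Fw z w := fun z w => by
    rw [hsq z w]
    have := mul_nonneg (half_pos hσ).le (hMnn (w - k z))
    linarith
  have hdiff : ∀ z, k z0 - k z = M⁻¹ *ᵥ (U *ᵥ (Aᵀ *ᵥ (z - z0))) := fun z => by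
    simp only [k, mulVec_sub, mulVec_add]
    abel
  -- The square at `w = k z0` is the sGS proximal term.
  have hS : ∀ z, Fw z (k z0) = Fw z (k z) + 1 / 2 * ((z - z0) ⬝ᵥ (Shatz *ᵥ (z - z0))) :=
    fun z => by
      rw [hsq z (k z0), hdiff, hMinv]
      simp only [Shatz, smul_mulVec, dotProduct_smul, smul_eq_mul, ← mulVec_mulVec]
      rw [dotProduct_mulVec (z - z0) A, ← mulVec_transpose, dot_symm hUsym (Aᵀ *ᵥ (z - z0))]
      ring
  clear_value k
  constructor
  · intro hmin
    -- Finiteness at `zbar` is what allows cancelling the conjugate in the second `w`-update.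
    have hfin : fconj f zbar ≠ ⊤ := fun htop => by
      have h := hmin z₀ w0
      have h0 := hproper_fin.ne
      have h1 := hproper_ne_bot z₀
      simp only [Ψ, Φ, htop] at h
      lift fconj f z₀ to ℝ using ⟨h0, h1⟩ with t
      rw [EReal.top_add_coe, EReal.top_add_coe, top_le_iff] at h
      norm_cast at h
      exact EReal.coe_ne_top _ h
    have hbot := hproper_ne_bot zbar
    refine ⟨k z0, hkmin z0, fun z => ?_, fun w => ?_⟩
    · -- Comparing with `(z, k z)` makes the square vanish on the right-hand side.
      refine EReal_add_cases (hmin z (k z)) ?_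
      have h1 := hS z
      have h2 := hS zbar
      have h3 := hkmin zbar wbar
      simp only [Fw] at h1 h2 h3
      simp only [dotProduct_add]
      linarith
    · have h := hmin zbar w
      simp only [Ψ, Φ] at h
      lift fconj f zbar to ℝ using ⟨hfin, hbot⟩ with t
      norm_cast at h
      simp only [dotProduct_add] at h
      simp only [Fw]
      linarith
  · rintro ⟨wh, ha, hb, hc⟩ z w
    have hwh : wh = k z0 := by
      have h1 := hsq z0 wh
      have h2 := ha (k z0)
      refine sub_eq_zero.mp (hMpos _ ?_)
      refine nonpos_of_mul_nonpos_right (a := σ / 2) ?_ (half_pos hσ)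
      linarith
    subst hwh
    refine EReal_add_cases (hb z) ?_
    have h1 := hS z
    have h2 := hS zbar
    have h3 := hkmin z w
    have h4 := hc (k zbar)
    simp only [Fw] at h1 h2 h3 h4
    simp only [dotProduct_add]
    linarith
end
end

section
/- Let r : ℝ^p → ℝ be convex, let σ > 0, let x, c ∈ ℝ^p, and set φ := x − σ·c. Suppose x̄ ∈ ℝ^p minimizes y ↦ σ·r(y) + (1/2)‖y − φ‖² over ℝ^p, and set v̄ := (φ − x̄)/σ. Then: (a) x − σ·(c + v̄) = x̄; (b) r*(v̄) is finite; and (c) for every v ∈ ℝ^p, r*(v̄) + ( −⟨x, v̄⟩ + (σ/2)‖c + v̄‖² ) ≤ r*(v) + ( −⟨x, v⟩ + (σ/2)‖c + v‖² ) as an inequality in EReal; that is, v̄ minimizes v ↦ r*(v) − ⟨x, v⟩ + (σ/2)‖c + v‖² over ℝ^p. -/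
/-!
Convexity turns the minimality of `xbar` into the subgradient inequality
`r y ≥ r xbar + ⟨v̄, y - xbar⟩`, by comparing `xbar` with `xbar + t (y - xbar)` and letting `t`
tend to `0`. Hence the supremum defining `r*(v̄)` is attained at `xbar`, which gives its finiteness.
For any `v`, the same point gives the lower bound `r*(v) ≥ ⟨v, xbar⟩ - r xbar`. Since
`x = xbar + σ (c + v̄)`, replacing `r*(v)` by this bound makes the difference of the two objective
values exactly `(σ / 2) ‖v - v̄‖²`, which is nonnegative.
-/

open Matrix

noncomputable section

theorem nonneg_of_forall_quadratic {A B : ℝ} (hB : 0 ≤ B)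
    (h : ∀ t : ℝ, 0 < t → t ≤ 1 → 0 ≤ t * A + t ^ 2 * B) : 0 ≤ A := by
  by_contra! hA
  have hpos : 0 < B - A := by linarith
  -- At `t = -A / (B - A)` the quadratic equals `t * (-A ^ 2 / (B - A)) < 0`.
  have ht : 0 < -A / (B - A) := div_pos (by linarith) hpos
  have h1 := h (-A / (B - A)) ht ((div_le_one hpos).2 (by linarith))
  have h2 : (-A / (B - A)) * A + (-A / (B - A)) ^ 2 * B
      = -((-A / (B - A)) * (A ^ 2 / (B - A))) := by
    field_simp
    ring
  have h3 : 0 < A ^ 2 / (B - A) := div_pos (by nlinarith) hpos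
  have h4 := mul_pos ht h3
  linarith

/-- Optimality condition of the proximal problem: `(φ - xbar) / σ` is a subgradient of `r` at
`xbar`, here multiplied through by `σ`. -/
theorem prox_subgradient {p : ℕ} {r : (Fin p → ℝ) → ℝ} (hr : ConvexOn ℝ Set.univ r)
    {σ : ℝ} (hσ : 0 < σ) {φ xbar : Fin p → ℝ}
    (hmin : ∀ y : Fin p → ℝ,
      σ * r xbar + 1 / 2 * euclNorm (xbar - φ) ^ 2 ≤ σ * r y + 1 / 2 * euclNorm (y - φ) ^ 2)
    (y : Fin p → ℝ) :
    (φ - xbar) ⬝ᵥ (y - xbar) ≤ σ * (r y - r xbar) := by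
  have key : 0 ≤ σ * (r y - r xbar) - (φ - xbar) ⬝ᵥ (y - xbar) := by
    refine nonneg_of_forall_quadratic (B := 1 / 2 * euclNorm (y - xbar) ^ 2) (by positivity) ?_
    intro t ht ht1
    have h1 := hmin ((1 - t) • xbar + t • y)
    have h2 := hr.2 (Set.mem_univ xbar) (Set.mem_univ y) (sub_nonneg.2 ht1) ht.le (by ring)
    simp only [smul_eq_mul] at h2
    have h3 := mul_le_mul_of_nonneg_left h2 hσ.le
    have e : (1 - t) • xbar + t • y - φ = t • (y - xbar) - (φ - xbar) := by
      ext i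
      simp only [Pi.add_apply, Pi.sub_apply, Pi.smul_apply, smul_eq_mul]
      ring
    have e' : xbar - φ = -(φ - xbar) := by abel
    rw [e, e'] at h1
    simp only [euclNorm_sq] at h1 ⊢
    generalize y - xbar = w at *
    generalize φ - xbar = d at *
    simp only [sub_dotProduct, dotProduct_sub, smul_dotProduct, dotProduct_smul, neg_dotProduct,
      dotProduct_neg, smul_eq_mul, dotProduct_comm w d] at h1
    linarith
  linarith

/-- **Closed-form `v`-update of dHPR (Moreau identity computation).** -/
theorem v_update_closed_form
    (p : ℕ) (r : (Fin p → ℝ) → ℝ) (hr : ConvexOn ℝ Set.univ r)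
    (σ : ℝ) (hσ : 0 < σ) (x c : Fin p → ℝ)
    (xbar : Fin p → ℝ)
    (hxbar : ∀ y : Fin p → ℝ,
      σ * r xbar + 1 / 2 * euclNorm (xbar - (x - σ • c)) ^ 2 ≤
        σ * r y + 1 / 2 * euclNorm (y - (x - σ • c)) ^ 2) :
    let φ : Fin p → ℝ := x - σ • c
    let vbar : Fin p → ℝ := σ⁻¹ • (φ - xbar)
    -- (a)
    (x - σ • (c + vbar) = xbar) ∧
    -- (b) `r*(v̄)` is finite
    (fconj r vbar ≠ ⊥ ∧ fconj r vbar ≠ ⊤) ∧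
    -- (c) `v̄` minimizes the `v`-subproblem
    (∀ v : Fin p → ℝ,
      fconj r vbar + ((-(x ⬝ᵥ vbar) + σ / 2 * euclNorm (c + vbar) ^ 2 : ℝ) : EReal) ≤
        fconj r v + ((-(x ⬝ᵥ v) + σ / 2 * euclNorm (c + v) ^ 2 : ℝ) : EReal)) := by
  intro φ vbar
  have hv : σ • vbar = φ - xbar := smul_inv_smul₀ hσ.ne' _
  have hx : x = xbar + σ • (c + vbar) := by
    rw [smul_add, hv]
    simp only [φ]
    abel
  have hsub : ∀ y, vbar ⬝ᵥ y - r y ≤ vbar ⬝ᵥ xbar - r xbar := by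
    intro y
    have h := prox_subgradient hr hσ hxbar y
    change (φ - xbar) ⬝ᵥ (y - xbar) ≤ _ at h
    rw [← hv, smul_dotProduct, smul_eq_mul, dotProduct_sub] at h
    have := le_of_mul_le_mul_left h hσ
    linarith
  have hconj : fconj r vbar = ((vbar ⬝ᵥ xbar - r xbar : ℝ) : EReal) :=
    le_antisymm (iSup_le fun y => EReal.coe_le_coe_iff.2 (hsub y))
      (le_iSup (fun y => ((vbar ⬝ᵥ y - r y : ℝ) : EReal)) xbar)
  refine ⟨sub_eq_of_eq_add hx, ?_, fun v => ?_⟩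
  · rw [hconj]
    exact ⟨EReal.coe_ne_bot _, EReal.coe_ne_top _⟩
  · have hlow : ((v ⬝ᵥ xbar - r xbar : ℝ) : EReal) ≤ fconj r v :=
      le_iSup (fun y => ((v ⬝ᵥ y - r y : ℝ) : EReal)) xbar
    refine le_trans ?_ (add_le_add_left hlow _)
    rw [hconj, ← EReal.coe_add, ← EReal.coe_add, EReal.coe_le_coe_iff]
    obtain ⟨u, rfl⟩ : ∃ u, v = vbar + u := ⟨v - vbar, by abel⟩
    have hu : 0 ≤ σ / 2 * (u ⬝ᵥ u) := by
      rw [← euclNorm_sq]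
      positivity
    have hxu : x ⬝ᵥ u = u ⬝ᵥ xbar + σ * ((c + vbar) ⬝ᵥ u) := by
      rw [hx, add_dotProduct, smul_dotProduct, smul_eq_mul, dotProduct_comm xbar u]
    rw [← add_assoc c vbar u]
    simp only [euclNorm_sq]
    generalize c + vbar = a at *
    simp only [add_dotProduct, dotProduct_add, dotProduct_comm u a] at hxu ⊢
    linarith
end
end
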